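/- arXiv:1205.4281 — 3 statements merged into one kernel-verified Lean document; each statement's English description precedes it below -/
import Mathlib

section
/- Suppose a > 0, the L¹-condition ∫₁^∞ |N(x) − a·x| / x² dx < ∞ holds, and there is a constant C such that |N(x) − a·x| ≤ C·x / log x for all x ≥ 2. Then the Chebyshev upper estimate holds: there is a constant B such that π(x) · log x / x ≤ B for all x ≥ 2 (equivalently, limsup_{x→∞} π(x) log x / x < ∞). -/
open MeasureTheory Real Filter Complex

/-- The generalized integer attached to an exponent vector `α`: `n(α) = ∏ k, (p k)^(α k)`. -/
noncomputable def beurlingInt (p : ℕ → ℝ) (α : ℕ →₀ ℕ) : ℝ :=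
  α.prod fun k e => (p k) ^ e

/-- Counting function of generalized integers: `N(x) = #{α : n(α) < x}`. -/
noncomputable def beurlingN (p : ℕ → ℝ) (x : ℝ) : ℕ :=
  Set.ncard {α : ℕ →₀ ℕ | beurlingInt p α < x}

/-- Counting function of generalized primes: `π(x) = #{k : p k < x}`. -/
noncomputable def beurlingPi (p : ℕ → ℝ) (x : ℝ) : ℕ :=
  Set.ncard {k : ℕ | p k < x}

/-- Sum of the weights with `v i < u`. -/
noncomputable def btT {ι : Type*} (v c : ι → ℝ) (hfin : ∀ u, {i | v i < u}.Finite) (u : ℝ) : ℝ :=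
  ∑ i ∈ (hfin u).toFinset, c i

lemma bt_interval {ι : Type*} (v c : ι → ℝ) (hfin : ∀ u, {i | v i < u}.Finite)
    (S : Finset ι) (X : ℝ) (hS : ∀ i, i ∈ S ↔ v i < X) (s t : ℝ) (hst : s ≤ t) (ht : t ≤ X) :
    ∑ i ∈ S, c i * (Set.Ico s t).indicator (fun _ => (1:ℝ)) (v i) =
      btT v c hfin t - btT v c hfin s := by
  classical
  have h : ∀ w ≤ X, btT v c hfin w = ∑ i ∈ S, if v i < w then c i else 0 := by
    intro w hw
    rw [btT, ← Finset.sum_filter]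
    apply Finset.sum_congr _ (fun _ _ => rfl)
    ext i
    simp only [Set.Finite.mem_toFinset, Set.mem_ofPred_eq, Finset.mem_filter, hS]
    constructor
    · intro h; exact ⟨by linarith, h⟩
    · exact fun h => h.2
  rw [h t ht, h s (hst.trans ht), ← Finset.sum_sub_distrib]
  apply Finset.sum_congr rfl
  intro i _
  by_cases h1 : v i < t <;> by_cases h2 : v i < s <;> simp [Set.indicator, h1, h2, not_lt.1]
  exact absurd (h2.trans_le hst) h1

/-- Averaging step. -/
lemma bt_step {ι : Type*} (v c : ι → ℝ) (hfin : ∀ u, {i | v i < u}.Finite)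
    (hc : ∀ i, 0 ≤ c i) (E : ℝ → ℝ) (hE : Integrable E) (hE0 : ∀ w ≤ 0, E w = 0)
    (a C : ℝ) (ha : 0 < a)
    (hyp : ∀ u, |∑ i ∈ (hfin u).toFinset, c i * (a + E (u - v i)) - a * max u 0| ≤ C)
    (h : ℝ) (hh : 0 < h) (u M : ℝ)
    (hM : ∀ y ≤ u + 2 * h, btT v c hfin (y + h) - btT v c hfin y ≤ M) :
    a * h * (btT v c hfin (u + 2 * h) - btT v c hfin (u + h)) ≤
      h * (2 * C + 2 * a * h) + (∫ x, |E x|) * M := by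
  classical
  set T := btT v c hfin with hT
  have hTmono : Monotone T := by
    intro s t hst
    apply Finset.sum_le_sum_of_subset_of_nonneg
    · intro i; simp only [Set.Finite.mem_toFinset, Set.mem_ofPred_eq]; intro hi; linarith
    · intro i _ _; exact hc i
  set S := (hfin (u + 3 * h)).toFinset with hSdef
  have hS : ∀ i, i ∈ S ↔ v i < u + 3 * h := by intro i; simp [hSdef]
  let q : ℝ → ℝ := fun w => ∑ i ∈ S, c i * E (w - v i)
  have hq : ∀ w ≤ u + 3 * h, |a * T w + q w - a * max w 0| ≤ C := by
    intro w hw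
    have : a * T w + q w = ∑ i ∈ (hfin w).toFinset, c i * (a + E (w - v i)) := by
      have h1 : q w = ∑ i ∈ (hfin w).toFinset, c i * E (w - v i) := by
        symm
        apply Finset.sum_subset
        · intro i; simp only [Set.Finite.mem_toFinset, Set.mem_ofPred_eq, hS]; intro hi; linarith
        · intro i _ hi
          simp only [Set.Finite.mem_toFinset, Set.mem_ofPred_eq, not_lt] at hi
          rw [hE0 _ (by linarith), mul_zero]
      rw [h1, hT, btT, Finset.mul_sum, ← Finset.sum_add_distrib]
      exact Finset.sum_congr rfl fun i _ => by ring
    rw [this]; exact hyp w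
  -- pointwise
  have hpt : ∀ w ∈ Set.Ico u (u + h), q (w + 2 * h) - q w ≤
      2 * C + 2 * a * h - a * (T (u + 2 * h) - T (u + h)) := by
    intro w hw
    have h1 := (abs_le.1 (hq (w + 2 * h) (by linarith [hw.2]))).2
    have h2 := (abs_le.1 (hq w (by linarith [hw.2]))).1
    have h3 : T (u + 2 * h) ≤ T (w + 2 * h) := hTmono (by linarith [hw.1])
    have h4 : T w ≤ T (u + h) := hTmono (by linarith [hw.2])
    have h5 : max (w + 2 * h) 0 ≤ max w 0 + 2 * h := by
      apply max_le
      · linarith [le_max_left w 0]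
      · linarith [le_max_right w 0]
    have h3' := mul_le_mul_of_nonneg_left h3 ha.le
    have h4' := mul_le_mul_of_nonneg_left h4 ha.le
    have h5' := mul_le_mul_of_nonneg_left h5 ha.le
    nlinarith
  let I : ℝ → ℝ := (Set.Ico u (u + h)).indicator (fun _ => (1:ℝ))
  have hImeas : Measurable I := measurable_const.indicator measurableSet_Ico
  have hIb : ∀ x, |I x| ≤ 1 := by
    intro x; simp only [I, Set.indicator]; split_ifs <;> simp
  have hInt : ∀ s t : ℝ, Integrable (fun x => I (x + s) * E (x + t)) := by
    intro s t
    refine (hE.comp_add_right t).bdd_mul (c := 1) ?_ ?_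
    · exact (hImeas.comp (measurable_id.add_const s)).aestronglyMeasurable
    · exact Filter.Eventually.of_forall fun x => hIb _
  have hJ1 : ∫ x, I x * (q (x + 2 * h) - q x) ≤
      h * (2 * C + 2 * a * h - a * (T (u + 2 * h) - T (u + h))) := by
    set K := 2 * C + 2 * a * h - a * (T (u + 2 * h) - T (u + h))
    have : ∫ x, I x * K = h * K := by
      rw [integral_mul_const]
      congr 1
      simp only [I]
      rw [integral_indicator measurableSet_Ico]
      simp [hh.le]
    rw [← this]
    apply integral_mono
    · have : (fun x => I x * (q (x + 2 * h) - q x)) = fun x => ∑ i ∈ S,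
          (c i * (I (x + 0) * E (x + (2 * h - v i))) - c i * (I (x + 0) * E (x + (- v i)))) := by
        funext x
        simp only [q]
        rw [← Finset.sum_sub_distrib, Finset.mul_sum]
        refine Finset.sum_congr rfl fun i _ => ?_
        rw [add_zero, ← add_sub_assoc, ← sub_eq_add_neg]; ring
      rw [this]
      exact integrable_finsetSum _ fun i _ =>
        ((hInt _ _).const_mul _).sub ((hInt _ _).const_mul _)
    · have : Integrable I := by
        simp only [I]
        rw [integrable_indicator_iff measurableSet_Ico]
        exact integrableOn_const (by simp)
      exact this.mul_const K
    · intro x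
      by_cases hx : x ∈ Set.Ico u (u + h)
      · simpa [I, hx] using hpt x hx
      · simp [I, hx]
  have hJ2 : ∫ x, I x * (q (x + 2 * h) - q x) =
      ∫ x, E x * ∑ i ∈ S, c i * (I (x - 2 * h + v i) - I (x + v i)) := by
    have e1 : (fun x => I x * (q (x + 2 * h) - q x)) = fun x => ∑ i ∈ S,
          (c i * (I (x + 0) * E (x + (2 * h - v i))) - c i * (I (x + 0) * E (x + (- v i)))) := by
        funext x
        simp only [q]
        rw [← Finset.sum_sub_distrib, Finset.mul_sum]
        refine Finset.sum_congr rfl fun i _ => ?_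
        rw [add_zero, ← add_sub_assoc, ← sub_eq_add_neg]; ring
    have e2 : (fun x => E x * ∑ i ∈ S, c i * (I (x - 2 * h + v i) - I (x + v i))) =
        fun x => ∑ i ∈ S, (c i * (I (x + (-(2 * h) + v i)) * E (x + 0)) -
          c i * (I (x + v i) * E (x + 0))) := by
      funext x
      rw [Finset.mul_sum]
      refine Finset.sum_congr rfl fun i _ => ?_
      rw [add_zero, ← add_assoc, ← sub_eq_add_neg]; ring
    rw [e1, e2, integral_finsetSum, integral_finsetSum]
    · refine Finset.sum_congr rfl fun i _ => ?_
      rw [integral_sub ((hInt _ _).const_mul _) ((hInt _ _).const_mul _),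
        integral_sub ((hInt _ _).const_mul _) ((hInt _ _).const_mul _)]
      simp only [integral_const_mul]
      rw [← integral_add_right_eq_self (fun x => I (x + (-(2 * h) + v i)) * E (x + 0))
        (2 * h - v i), ← integral_add_right_eq_self (fun x => I (x + v i) * E (x + 0)) (- v i)]
      congr 2
      · congr 1; funext x; congr 2 <;> ring
      · congr 1; funext x; congr 2 <;> ring
    · exact fun i _ => ((hInt _ _).const_mul _).sub ((hInt _ _).const_mul _)
    · exact fun i _ => ((hInt _ _).const_mul _).sub ((hInt _ _).const_mul _)
  have hbd : ∀ x, |E x * ∑ i ∈ S, c i * (I (x - 2 * h + v i) - I (x + v i))| ≤ |E x| * M := by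
    intro x
    rcases le_or_gt x 0 with hx | hx
    · simp [hE0 x hx]
    · rw [abs_mul]
      apply mul_le_mul_of_nonneg_left _ (abs_nonneg _)
      have k1 : ∀ s, u - s + h ≤ u + 3 * h → ∑ i ∈ S, c i * I (s + v i) = T (u - s + h) - T (u - s) := by
        intro s hs
        rw [← bt_interval v c hfin S (u + 3 * h) hS (u - s) (u - s + h) (by linarith) hs]
        refine Finset.sum_congr rfl fun i _ => ?_
        congr 1
        simp only [I, Set.indicator, Set.mem_Ico]
        congr 1
        apply propext
        constructor <;> rintro ⟨_, _⟩ <;> constructor <;> linarith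
      simp only [mul_sub, Finset.sum_sub_distrib]
      rw [k1 _ (by linarith), k1 _ (by linarith), abs_le]
      have m1 := hM (u - (x - 2 * h)) (by linarith)
      have m2 := hM (u - x) (by linarith)
      have n1 : T (u - x) ≤ T (u - x + h) := hTmono (by linarith)
      have n2 : T (u - (x - 2 * h)) ≤ T (u - (x - 2 * h) + h) := hTmono (by linarith)
      constructor <;> linarith
  have hJ3 : |∫ x, E x * ∑ i ∈ S, c i * (I (x - 2 * h + v i) - I (x + v i))| ≤
      (∫ x, |E x|) * M := by
    rw [← integral_mul_const]
    exact norm_integral_le_of_norm_le (f := fun x => E x * ∑ i ∈ S, c i * (I (x - 2 * h + v i) - I (x + v i))) (hE.abs.mul_const M) (Filter.Eventually.of_forall hbd)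
  rw [← hJ2] at hJ3
  have := (abs_le.1 hJ3).1
  nlinarith

lemma bt_main {ι : Type*} (v c : ι → ℝ) (hfin : ∀ u, {i | v i < u}.Finite)
    (hc : ∀ i, 0 ≤ c i) (E : ℝ → ℝ) (hE : Integrable E) (hE0 : ∀ w ≤ 0, E w = 0)
    (a C : ℝ) (ha : 0 < a) (hElow : ∀ w, 0 < w → Real.exp (-w) ≤ a + E w)
    (hyp : ∀ u, |∑ i ∈ (hfin u).toFinset, c i * (a + E (u - v i)) - a * max u 0| ≤ C) :
    ∃ B, ∀ y, btT v c hfin (y + 1) - btT v c hfin y ≤ B := by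
  classical
  set T := btT v c hfin with hT
  have hTmono : Monotone T := by
    intro s t hst
    apply Finset.sum_le_sum_of_subset_of_nonneg
    · intro i; simp only [Set.Finite.mem_toFinset, Set.mem_ofPred_eq]; intro hi; linarith
    · intro i _ _; exact hc i
  have hEn : 0 ≤ ∫ x, |E x| := integral_nonneg fun _ => abs_nonneg _
  have hC : 0 ≤ C := (abs_nonneg _).trans (hyp 0)
  obtain ⟨h, hh1, hh⟩ : ∃ h : ℝ, 1 ≤ h ∧ (∫ x, |E x|) ≤ a * h / 2 := by
    refine ⟨max 1 (2 * (∫ x, |E x|) / a), le_max_left _ _, ?_⟩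
    have := le_max_right 1 (2 * (∫ x, |E x|) / a)
    rw [div_le_iff₀ ha] at this
    linarith
  have hhp : 0 < h := by linarith
  set A := (2 * C + 2 * a * h) / a with hA
  have hA0 : 0 ≤ A := by positivity
  have step : ∀ y M, 0 ≤ M → (∀ z ≤ y + h, T (z + h) - T z ≤ M) → T (y + h) - T y ≤ A + M / 2 := by
    intro y M hM0 hM
    have := bt_step v c hfin hc E hE hE0 a C ha hyp h hhp (y - h) M
      (fun z hz => hM z (by linarith))
    have e1 : y - h + 2 * h = y + h := by ring
    have e2 : y - h + h = y := by ring
    rw [e1, e2] at this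
    have h2 : (∫ x, |E x|) * M ≤ a * h / 2 * M := mul_le_mul_of_nonneg_right hh hM0
    have h3 : a * h * (A + M / 2) = h * (2 * C + 2 * a * h) + a * h / 2 * M := by
      rw [hA]; field_simp
    have h4 : a * h * (T (y + h) - T y) ≤ a * h * (A + M / 2) := by rw [h3]; linarith
    exact le_of_mul_le_mul_left h4 (by positivity)
  set D := Real.exp h * (a + C) with hD
  have hD0 : 0 ≤ D := by positivity
  have grow : ∀ y, T (y + h) - T y ≤ D * (1 + max (y + h) 0) := by
    intro y
    have h1 := (abs_le.1 (hyp (y + h))).2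
    have h2 : Real.exp (-h) * (T (y + h) - T y) ≤
        ∑ i ∈ (hfin (y + h)).toFinset, c i * (a + E (y + h - v i)) := by
      rw [hT, ← bt_interval v c hfin (hfin (y + h)).toFinset (y + h) (by simp) y (y + h)
        (by linarith) le_rfl, Finset.mul_sum]
      apply Finset.sum_le_sum
      intro i hi
      simp only [Set.Finite.mem_toFinset, Set.mem_ofPred_eq] at hi
      have h3 := hElow (y + h - v i) (by linarith)
      rw [mul_left_comm]
      apply mul_le_mul_of_nonneg_left _ (hc i)
      by_cases hy : v i ∈ Set.Ico y (y + h)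
      · simp only [hy, Set.indicator_of_mem, mul_one]
        refine le_trans (Real.exp_le_exp.2 ?_) h3
        linarith [hy.1]
      · simp only [hy, not_false_eq_true, Set.indicator_of_notMem, mul_zero]
        exact (Real.exp_pos _).le.trans h3
    have h5 : T (y + h) - T y ≤ Real.exp h * (C + a * max (y + h) 0) := by
      have : T (y + h) - T y = Real.exp h * (Real.exp (-h) * (T (y + h) - T y)) := by
        rw [← mul_assoc, ← Real.exp_add]; simp
      rw [this]
      apply mul_le_mul_of_nonneg_left _ (Real.exp_pos _).le
      linarith
    refine h5.trans ?_
    rw [hD, mul_assoc]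
    apply mul_le_mul_of_nonneg_left _ (Real.exp_pos _).le
    nlinarith [le_max_right (y + h) 0, mul_nonneg hC (le_max_right (y + h) 0)]
  have iter : ∀ n : ℕ, ∀ y, T (y + h) - T y ≤ 2 * A + (1 / 2) ^ n * (D * (1 + max (y + h + n * h) 0)) := by
    intro n
    induction n with
    | zero => intro y; have := grow y; simp; linarith
    | succ n ih =>
      intro y
      have := step y (2 * A + (1 / 2) ^ n * (D * (1 + max (y + h + h + n * h) 0)))
        (by positivity) (by
          intro z hz
          refine (ih z).trans ?_
          gcongr)
      refine this.trans (le_of_eq ?_)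
      push_cast
      have e : y + h + h + n * h = y + h + (n + 1) * h := by ring
      rw [e, pow_succ]; ring
  refine ⟨2 * A, fun y => ?_⟩
  have hle : T (y + 1) - T y ≤ T (y + h) - T y := by linarith [hTmono (show y + 1 ≤ y + h by linarith)]
  refine hle.trans ?_
  set R := 1 + |y + h| with hR
  have key : ∀ n : ℕ, T (y + h) - T y ≤ 2 * A + (D * R * (1 / 2) ^ n + D * h * (n * (1 / 2) ^ n)) := by
    intro n
    refine (iter n y).trans ?_
    have : 1 + max (y + h + n * h) 0 ≤ R + n * h := by
      have : max (y + h + n * h) 0 ≤ |y + h| + n * h :=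
        max_le (by linarith [le_abs_self (y + h)]) (by positivity)
      linarith
    have h2 : (1 / 2 : ℝ) ^ n * (D * (1 + max (y + h + n * h) 0)) ≤ (1 / 2) ^ n * (D * (R + n * h)) := by
      gcongr
    linarith
  have lim : Tendsto (fun n : ℕ => 2 * A + (D * R * (1 / 2 : ℝ) ^ n + D * h * (n * (1 / 2 : ℝ) ^ n))) atTop
      (nhds (2 * A + (D * R * 0 + D * h * 0))) := by
    refine tendsto_const_nhds.add (Tendsto.add (Tendsto.const_mul _ ?_) (Tendsto.const_mul _ ?_))
    · exact tendsto_pow_atTop_nhds_zero_of_lt_one (by norm_num) (by norm_num)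
    · exact tendsto_self_mul_const_pow_of_lt_one (by norm_num) (by norm_num)
  have := ge_of_tendsto' lim key
  linarith

section NT
variable {p : ℕ → ℝ}

lemma bt_pgt (hmono : Monotone p) (hp1 : 1 < p 0) (k : ℕ) : 1 < p k :=
  hp1.trans_le (hmono (Nat.zero_le k))

lemma bt_one_le_prod (s : Finset ℕ) (f : ℕ → ℝ) (h : ∀ i ∈ s, 1 ≤ f i) : 1 ≤ ∏ i ∈ s, f i := by
  have := Finset.prod_le_prod (s := s) (f := fun _ => (1:ℝ)) (g := f)
    (fun _ _ => zero_le_one) h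
  simpa using this

lemma bt_pow_le (hp : ∀ k, 1 < p k) (α : ℕ →₀ ℕ) (k : ℕ) : p k ^ α k ≤ beurlingInt p α := by
  classical
  rw [beurlingInt, Finsupp.prod]
  by_cases hk : k ∈ α.support
  · rw [← Finset.mul_prod_erase _ _ hk]
    apply le_mul_of_one_le_right (pow_nonneg (by linarith [hp k]) _)
    exact bt_one_le_prod _ _ fun i _ => one_le_pow₀ (hp i).le
  · rw [Finsupp.notMem_support_iff.1 hk, pow_zero]
    exact bt_one_le_prod _ _ fun i _ => one_le_pow₀ (hp i).le

lemma bt_one_le (hp : ∀ k, 1 < p k) (α : ℕ →₀ ℕ) : 1 ≤ beurlingInt p α := by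
  rw [beurlingInt, Finsupp.prod]
  exact bt_one_le_prod _ _ fun i _ => one_le_pow₀ (hp i).le

lemma bt_add (_hp : ∀ k, 1 < p k) (α : ℕ →₀ ℕ) (k j : ℕ) :
    beurlingInt p (α + Finsupp.single k j) = beurlingInt p α * p k ^ j := by
  classical
  rw [beurlingInt, Finsupp.prod_add_index']
  · simp [beurlingInt]
  · simp
  · intro a b c; exact pow_add _ _ _

lemma bt_finP (hptop : Tendsto p atTop atTop) (x : ℝ) : ∃ K : ℕ, ∀ k, p k < x → k < K := by
  obtain ⟨K, hK⟩ := (hptop.eventually_ge_atTop x).exists_forall_of_atTop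
  exact ⟨K, fun k hk => by by_contra h; linarith [hK k (not_lt.1 h)]⟩

lemma bt_finJ (hmono : Monotone p) (hp1 : 1 < p 0) (x : ℝ) :
    ∃ M : ℕ, ∀ k j : ℕ, p k ^ j < x → j < M := by
  obtain ⟨M, hM⟩ := pow_unbounded_of_one_lt x hp1
  refine ⟨M, fun k j hj => ?_⟩
  by_contra h
  have h1 : p 0 ^ M ≤ p 0 ^ j := pow_le_pow_right₀ hp1.le (not_lt.1 h)
  have h2 : p 0 ^ j ≤ p k ^ j := pow_le_pow_left₀ (by linarith) (hmono (Nat.zero_le k)) j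
  linarith

lemma bt_finN (hmono : Monotone p) (hp1 : 1 < p 0) (hptop : Tendsto p atTop atTop) (x : ℝ) :
    {α : ℕ →₀ ℕ | beurlingInt p α < x}.Finite := by
  classical
  have hp := bt_pgt hmono hp1
  obtain ⟨K, hK⟩ := bt_finP hptop x
  obtain ⟨M, hM⟩ := bt_finJ hmono hp1 x
  apply ((Finset.range K).finsupp (fun _ => Finset.range (M + 1))).finite_toSet.subset
  intro α hα
  have hα' : beurlingInt p α < x := hα
  rw [Finset.mem_coe, Finset.mem_finsupp_iff]
  constructor
  · intro k hk
    rw [Finset.mem_range]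
    apply hK
    have h1 : α k ≠ 0 := Finsupp.mem_support_iff.1 hk
    have := le_self_pow₀ (hp k).le h1
    linarith [bt_pow_le hp α k]
  · intro k _
    rw [Finset.mem_range]
    have := hM k (α k) ((bt_pow_le hp α k).trans_lt hα')
    omega

lemma bt_finS (hmono : Monotone p) (hp1 : 1 < p 0) (hptop : Tendsto p atTop atTop) (x : ℝ) :
    {i : ℕ × ℕ | p i.1 ^ (i.2 + 1) < x}.Finite := by
  have hp := bt_pgt hmono hp1
  obtain ⟨K, hK⟩ := bt_finP hptop x
  obtain ⟨M, hM⟩ := bt_finJ hmono hp1 x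
  apply (Finset.range K ×ˢ Finset.range M).finite_toSet.subset
  rintro ⟨k, j⟩ hi
  have hi' : p k ^ (j + 1) < x := hi
  simp only [Finset.mem_coe, Finset.mem_product, Finset.mem_range]
  have h1 := hM k (j + 1) hi'
  exact ⟨hK k ((le_self_pow₀ (hp k).le (by omega)).trans_lt hi'), by omega⟩

lemma bt_N_eq (hmono : Monotone p) (hp1 : 1 < p 0) (hptop : Tendsto p atTop atTop) (x : ℝ) :
    beurlingN p x = (bt_finN hmono hp1 hptop x).toFinset.card := by
  rw [beurlingN, Set.ncard_eq_toFinset_card _ (bt_finN hmono hp1 hptop x)]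

lemma bt_N_mono (hmono : Monotone p) (hp1 : 1 < p 0) (hptop : Tendsto p atTop atTop) :
    Monotone (beurlingN p) := by
  intro x y hxy
  apply Set.ncard_le_ncard _ (bt_finN hmono hp1 hptop y)
  intro α hα
  exact lt_of_lt_of_le (show beurlingInt p α < x from hα) hxy

lemma bt_N_zero (hmono : Monotone p) (hp1 : 1 < p 0) (x : ℝ) (hx : x ≤ 1) :
    beurlingN p x = 0 := by
  rw [beurlingN]
  convert Set.ncard_empty (ℕ →₀ ℕ)
  ext α
  simp only [Set.mem_ofPred_eq, Set.mem_empty_iff_false, iff_false, not_lt]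
  exact hx.trans (bt_one_le (bt_pgt hmono hp1) α)

lemma bt_N_pos (hmono : Monotone p) (hp1 : 1 < p 0) (hptop : Tendsto p atTop atTop)
    (x : ℝ) (hx : 1 < x) : 1 ≤ beurlingN p x := by
  rw [bt_N_eq hmono hp1 hptop, Nat.one_le_iff_ne_zero, Finset.card_ne_zero]
  refine ⟨0, ?_⟩
  simpa [beurlingInt] using hx

lemma bt_count (hmono : Monotone p) (hp1 : 1 < p 0) (hptop : Tendsto p atTop atTop) (x : ℝ)
    (k j : ℕ) :
    ((bt_finN hmono hp1 hptop x).toFinset.filter (fun α => j ≤ α k)).card =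
      beurlingN p (x / p k ^ j) := by
  classical
  have hp := bt_pgt hmono hp1
  have hpk : 0 < p k ^ j := pow_pos (by linarith [hp k]) _
  rw [bt_N_eq hmono hp1 hptop]
  symm
  apply Finset.card_bij (fun α _ => α + Finsupp.single k j)
  · intro α hα
    simp only [Set.Finite.mem_toFinset, Set.mem_ofPred_eq, Finset.mem_filter] at hα ⊢
    rw [bt_add hp]
    rw [lt_div_iff₀ hpk] at hα
    exact ⟨hα, by simp⟩
  · intro α _ β _ h
    exact add_right_cancel h
  · intro β hβ
    simp only [Set.Finite.mem_toFinset, Set.mem_ofPred_eq, Finset.mem_filter] at hβ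
    have h1 : β - Finsupp.single k j + Finsupp.single k j = β := by
      apply tsub_add_cancel_of_le
      rw [Finsupp.single_le_iff]; exact hβ.2
    refine ⟨β - Finsupp.single k j, ?_, h1⟩
    simp only [Set.Finite.mem_toFinset, Set.mem_ofPred_eq]
    rw [lt_div_iff₀ hpk, ← bt_add hp, h1]
    exact hβ.1

lemma bt_log (hmono : Monotone p) (hp1 : 1 < p 0) (hptop : Tendsto p atTop atTop) (x : ℝ)
    (α : ℕ →₀ ℕ) (hα : beurlingInt p α < x) :
    Real.log (beurlingInt p α) = ∑ i ∈ (bt_finS hmono hp1 hptop x).toFinset,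
      if i.2 + 1 ≤ α i.1 then Real.log (p i.1) else 0 := by
  classical
  have hp := bt_pgt hmono hp1
  rw [beurlingInt, Finsupp.prod, Real.log_prod]
  swap
  · intro k _; exact (pow_pos (by linarith [hp k]) _).ne'
  simp only [Real.log_pow]
  rw [← Finset.sum_filter]
  have : (bt_finS hmono hp1 hptop x).toFinset.filter (fun i => i.2 + 1 ≤ α i.1) =
      (α.support.sigma (fun k => Finset.range (α k))).map
        (Equiv.sigmaEquivProd ℕ ℕ).toEmbedding := by
    ext ⟨k, j⟩
    simp only [Set.Finite.mem_toFinset, Set.mem_ofPred_eq, Finset.mem_filter, Finset.mem_map_equiv,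
      Finset.mem_sigma, Finset.mem_range, Equiv.sigmaEquivProd_symm_apply, Finsupp.mem_support_iff]
    constructor
    · rintro ⟨_, h⟩; exact ⟨by omega, by omega⟩
    · rintro ⟨_, h⟩
      refine ⟨?_, h⟩
      have h1 : p k ^ (j + 1) ≤ p k ^ α k := pow_le_pow_right₀ (hp k).le h
      linarith [bt_pow_le hp α k]
  rw [this, Finset.sum_map, Finset.sum_sigma]
  refine Finset.sum_congr rfl fun k _ => ?_
  simp

lemma bt_identity (hmono : Monotone p) (hp1 : 1 < p 0) (hptop : Tendsto p atTop atTop) (x : ℝ) :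
    ∑ α ∈ (bt_finN hmono hp1 hptop x).toFinset, Real.log (beurlingInt p α) =
    ∑ i ∈ (bt_finS hmono hp1 hptop x).toFinset,
      Real.log (p i.1) * beurlingN p (x / p i.1 ^ (i.2 + 1)) := by
  classical
  have : ∀ α ∈ (bt_finN hmono hp1 hptop x).toFinset, Real.log (beurlingInt p α) =
      ∑ i ∈ (bt_finS hmono hp1 hptop x).toFinset,
      if i.2 + 1 ≤ α i.1 then Real.log (p i.1) else 0 := by
    intro α hα
    apply bt_log hmono hp1 hptop
    simpa using hα
  rw [Finset.sum_congr rfl this, Finset.sum_comm]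
  refine Finset.sum_congr rfl fun i _ => ?_
  rw [← bt_count hmono hp1 hptop, ← Finset.sum_filter, Finset.sum_const, nsmul_eq_mul, mul_comm]

/-- `∑_{n<x} log (x/n) = O(x)`. -/
lemma bt_logsum (hmono : Monotone p) (hp1 : 1 < p 0) (hptop : Tendsto p atTop atTop)
    (D : ℝ) (hD : ∀ x : ℝ, 0 < x → (beurlingN p x : ℝ) ≤ D * x) (x : ℝ) (hx : 0 < x) :
    ∑ α ∈ (bt_finN hmono hp1 hptop x).toFinset, (Real.log x - Real.log (beurlingInt p α)) ≤
      2 * D * x := by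
  classical
  have hp := bt_pgt hmono hp1
  have hD0 : 0 ≤ D := by
    have := hD 1 one_pos
    linarith [(Nat.cast_nonneg (beurlingN p 1) : (0:ℝ) ≤ _)]
  have main : ∀ m : ℕ, ∀ x : ℝ, 0 < x → x ≤ Real.exp m →
    ∑ α ∈ (bt_finN hmono hp1 hptop x).toFinset, (Real.log x - Real.log (beurlingInt p α)) ≤
      2 * D * x := by
    intro m
    induction m with
    | zero =>
      intro x hx hxm
      have h0 := bt_N_zero hmono hp1 x (by simpa using hxm)
      rw [bt_N_eq hmono hp1 hptop, Finset.card_eq_zero] at h0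
      rw [h0, Finset.sum_empty]; positivity
    | succ m ih =>
      intro x hx hxm
      have hy : 0 < x / Real.exp 1 := by positivity
      have hyx : x / Real.exp 1 ≤ x := by
        apply div_le_self hx.le; exact Real.one_le_exp (by norm_num)
      have h1 := ih (x / Real.exp 1) hy (by
        rw [div_le_iff₀ (Real.exp_pos _), ← Real.exp_add]; exact_mod_cast hxm)
      have hlog : Real.log (x / Real.exp 1) = Real.log x - 1 := by
        rw [Real.log_div hx.ne' (Real.exp_pos _).ne', Real.log_exp]
      have h2 : ∑ α ∈ (bt_finN hmono hp1 hptop x).toFinset,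
          (Real.log x - 1 - Real.log (beurlingInt p α)) ≤
          ∑ α ∈ (bt_finN hmono hp1 hptop (x / Real.exp 1)).toFinset,
          (Real.log (x / Real.exp 1) - Real.log (beurlingInt p α)) := by
        rw [hlog]
        have hsub : (bt_finN hmono hp1 hptop (x / Real.exp 1)).toFinset ⊆
            (bt_finN hmono hp1 hptop x).toFinset := by
          intro α
          simp only [Set.Finite.mem_toFinset, Set.mem_ofPred_eq]
          intro h; linarith
        rw [← Finset.sum_sdiff hsub]
        have : ∑ α ∈ (bt_finN hmono hp1 hptop x).toFinset \
            (bt_finN hmono hp1 hptop (x / Real.exp 1)).toFinset,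
            (Real.log x - 1 - Real.log (beurlingInt p α)) ≤ 0 := by
          apply Finset.sum_nonpos
          intro α hα
          simp only [Finset.mem_sdiff, Set.Finite.mem_toFinset, Set.mem_ofPred_eq, not_lt] at hα
          have := Real.log_le_log hy hα.2
          linarith
        linarith
      have h3 : ∑ α ∈ (bt_finN hmono hp1 hptop x).toFinset,
          (Real.log x - 1 - Real.log (beurlingInt p α)) =
          ∑ α ∈ (bt_finN hmono hp1 hptop x).toFinset,
          (Real.log x - Real.log (beurlingInt p α)) - beurlingN p x := by
        rw [bt_N_eq hmono hp1 hptop]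
        simp only [Finset.sum_sub_distrib, Finset.sum_const, nsmul_eq_mul]
        ring
      have h4 := hD x hx
      have h5 : x / Real.exp 1 ≤ x / 2 := by
        apply div_le_div_of_nonneg_left hx.le (by norm_num)
        linarith [Real.add_one_le_exp 1]
      have h6 := mul_le_mul_of_nonneg_left h5 (by positivity : 0 ≤ 2 * D)
      linarith
  obtain ⟨m, hm⟩ := exists_nat_ge (Real.log x)
  exact main m x hx (by rwa [← Real.log_le_iff_le_exp hx])

lemma bt_linear (hmono : Monotone p) (hp1 : 1 < p 0) (hptop : Tendsto p atTop atTop)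
    (a : ℝ) (ha : 0 < a) (C : ℝ)
    (hO : ∀ x : ℝ, 2 ≤ x → |(beurlingN p x : ℝ) - a * x| ≤ C * x / Real.log x) :
    ∃ D, ∀ x : ℝ, 0 < x → (beurlingN p x : ℝ) ≤ D * x := by
  have hl2 : 0 < Real.log 2 := Real.log_pos (by norm_num)
  have hC : 0 ≤ C := by
    have h := (abs_nonneg _).trans (hO 2 le_rfl)
    by_contra hneg
    have : C * 2 / Real.log 2 < 0 := div_neg_of_neg_of_pos (by linarith) hl2
    linarith
  refine ⟨a + C / Real.log 2 + beurlingN p 2, fun x hx => ?_⟩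
  have hn : (0:ℝ) ≤ beurlingN p 2 := Nat.cast_nonneg _
  have hCl : 0 ≤ C / Real.log 2 := by positivity
  rcases le_or_gt 2 x with h2 | h2
  · have h1 := (abs_le.1 (hO x h2)).2
    have h3 : C * x / Real.log x ≤ C * x / Real.log 2 :=
      div_le_div_of_nonneg_left (by positivity) hl2 (Real.log_le_log (by norm_num) h2)
    have h4 : C * x / Real.log 2 = C / Real.log 2 * x := by ring
    nlinarith
  · rcases le_or_gt x 1 with h1 | h1
    · rw [bt_N_zero hmono hp1 x h1]; simp only [Nat.cast_zero]; positivity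
    · have : (beurlingN p x : ℝ) ≤ beurlingN p 2 := by
        exact_mod_cast bt_N_mono hmono hp1 hptop h2.le
      have h6 : (beurlingN p 2 : ℝ) ≤ (a + C / Real.log 2 + beurlingN p 2) := by linarith
      have := mul_le_mul h6 h1.le (by norm_num) (by positivity)
      linarith

lemma bt_asymp (hmono : Monotone p) (hp1 : 1 < p 0) (hptop : Tendsto p atTop atTop)
    (a : ℝ) (ha : 0 < a) (C : ℝ)
    (hO : ∀ x : ℝ, 2 ≤ x → |(beurlingN p x : ℝ) - a * x| ≤ C * x / Real.log x) :
    ∃ C', ∀ x : ℝ, 1 ≤ x →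
      |∑ α ∈ (bt_finN hmono hp1 hptop x).toFinset, Real.log (beurlingInt p α)
        - a * x * Real.log x| ≤ C' * x := by
  have hp := bt_pgt hmono hp1
  obtain ⟨D, hD⟩ := bt_linear hmono hp1 hptop a ha C hO
  have hD0 : 0 ≤ D := by
    have := hD 1 one_pos
    linarith [(Nat.cast_nonneg (beurlingN p 1) : (0:ℝ) ≤ _)]
  refine ⟨2 * D + |C| + (D + a), fun x hx => ?_⟩
  have hx0 : 0 < x := by linarith
  have h1 := bt_logsum hmono hp1 hptop D hD x hx0
  have h2 : 0 ≤ ∑ α ∈ (bt_finN hmono hp1 hptop x).toFinset,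
      (Real.log x - Real.log (beurlingInt p α)) := by
    apply Finset.sum_nonneg
    intro α hα
    simp only [Set.Finite.mem_toFinset, Set.mem_ofPred_eq] at hα
    have := Real.log_le_log (by linarith [bt_one_le hp α]) hα.le
    linarith
  rw [Finset.sum_sub_distrib, Finset.sum_const, nsmul_eq_mul, ← bt_N_eq hmono hp1 hptop] at h1 h2
  have hlx : 0 ≤ Real.log x := Real.log_nonneg hx
  have h3 : |(beurlingN p x : ℝ) * Real.log x - a * x * Real.log x| ≤ |C| * x + (D + a) * x := by
    rw [← sub_mul, abs_mul, abs_of_nonneg hlx]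
    rcases le_or_gt 2 x with h | h
    · have hl : 0 < Real.log x := Real.log_pos (by linarith)
      have := hO x h
      rw [le_div_iff₀ hl] at this
      have h5 : C * x ≤ |C| * x := mul_le_mul_of_nonneg_right (le_abs_self _) hx0.le
      have : 0 ≤ (D + a) * x := by positivity
      linarith
    · have hl1 : Real.log x ≤ 1 := by
        have := Real.log_le_sub_one_of_pos hx0; linarith
      have h6 : |(beurlingN p x : ℝ) - a * x| ≤ (D + a) * x := by
        have h7 := hD x hx0
        have h8 : (0:ℝ) ≤ beurlingN p x := Nat.cast_nonneg _
        have : 0 ≤ a * x := by positivity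
        rw [abs_le]; constructor <;> nlinarith
      have h9 : 0 ≤ |C| * x := by positivity
      have := mul_le_mul h6 hl1 hlx (by positivity)
      linarith
  rw [abs_le] at h3 ⊢
  constructor <;> nlinarith [abs_nonneg C, h3.1, h3.2, mul_nonneg hD0 hx0.le]

end NT

section Final
variable {p : ℕ → ℝ}

/-- The normalized error term in additive coordinates. -/
noncomputable def btE (p : ℕ → ℝ) (a : ℝ) (w : ℝ) : ℝ :=
  if 0 < w then (beurlingN p (Real.exp w) : ℝ) / Real.exp w - a else 0

lemma btE_integrable (a : ℝ)
    (hL1 : IntegrableOn (fun x : ℝ => ((beurlingN p x : ℝ) - a * x) / x ^ 2) (Set.Ici 1)) :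
    Integrable (btE p a) := by
  have himg : Real.exp '' Set.Ioi 0 = Set.Ioi 1 := by
    ext y
    simp only [Set.mem_image, Set.mem_Ioi]
    constructor
    · rintro ⟨x, hx, rfl⟩; exact Real.one_lt_exp_iff.2 hx
    · intro hy
      exact ⟨Real.log y, Real.log_pos hy, Real.exp_log (by linarith)⟩
  have h1 : IntegrableOn (fun x : ℝ => ((beurlingN p x : ℝ) - a * x) / x ^ 2)
      (Real.exp '' Set.Ioi 0) := by
    rw [himg]; exact hL1.mono_set Set.Ioi_subset_Ici_self
  rw [integrableOn_image_iff_integrableOn_abs_deriv_smul measurableSet_Ioi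
    (fun x _ => (Real.hasDerivAt_exp x).hasDerivWithinAt) Real.exp_injective.injOn] at h1
  have : btE p a = (Set.Ioi (0:ℝ)).indicator (fun x => |Real.exp x| •
      (((beurlingN p (Real.exp x) : ℝ) - a * Real.exp x) / Real.exp x ^ 2)) := by
    funext w
    simp only [btE, Set.indicator, Set.mem_Ioi]
    split_ifs with hw
    · have := Real.exp_pos w
      rw [abs_of_pos this, smul_eq_mul]
      field_simp
    · rfl
  rw [this, integrable_indicator_iff measurableSet_Ioi]
  exact h1

lemma bt_theta (hmono : Monotone p) (hp1 : 1 < p 0) (hptop : Tendsto p atTop atTop)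
    (a : ℝ) (ha : 0 < a)
    (hL1 : IntegrableOn (fun x : ℝ => ((beurlingN p x : ℝ) - a * x) / x ^ 2) (Set.Ici 1))
    (C : ℝ) (hO : ∀ x : ℝ, 2 ≤ x → |(beurlingN p x : ℝ) - a * x| ≤ C * x / Real.log x)
    (hfinP : ∀ x, {k : ℕ | p k < x}.Finite) :
    ∃ B : ℝ, ∀ x : ℝ, 0 < x → ∑ k ∈ (hfinP x).toFinset, Real.log (p k) ≤ B * x := by
  classical
  have hp := bt_pgt hmono hp1
  have hp0 : ∀ k, 0 < p k := fun k => by linarith [hp k]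
  let v : ℕ × ℕ → ℝ := fun i => ((i.2 + 1 : ℕ) : ℝ) * Real.log (p i.1)
  let c : ℕ × ℕ → ℝ := fun i => Real.log (p i.1) / p i.1 ^ (i.2 + 1)
  have hlogp : ∀ k, 0 < Real.log (p k) := fun k => Real.log_pos (hp k)
  have hc : ∀ i, 0 ≤ c i := fun i => div_nonneg (hlogp _).le (pow_nonneg (hp0 _).le _)
  have hvpos : ∀ i, 0 < v i := fun i => mul_pos (by positivity) (hlogp _)
  have hvexp : ∀ i, Real.exp (v i) = p i.1 ^ (i.2 + 1) := by
    intro i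
    simp only [v]
    rw [← Real.log_pow, Real.exp_log (pow_pos (hp0 _) _)]
  have hviff : ∀ i u, v i < u ↔ p i.1 ^ (i.2 + 1) < Real.exp u := by
    intro i u; rw [← hvexp, Real.exp_lt_exp]
  have hset : ∀ u, {i | v i < u} = {i : ℕ × ℕ | p i.1 ^ (i.2 + 1) < Real.exp u} := by
    intro u; ext i; exact hviff i u
  have hfin : ∀ u, {i | v i < u}.Finite := by
    intro u; rw [hset]; exact bt_finS hmono hp1 hptop _
  obtain ⟨C', hC'⟩ := bt_asymp hmono hp1 hptop a ha C hO
  have hC'0 : 0 ≤ C' := by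
    have := (abs_nonneg _).trans (hC' 1 le_rfl); linarith
  obtain ⟨B, hB⟩ := bt_main v c hfin hc (btE p a) (btE_integrable a hL1)
    (fun w hw => by simp [btE, not_lt.2 hw]) a C' ha
    (fun w hw => by
      simp only [btE, hw, if_true]
      have h1 : (1:ℝ) ≤ beurlingN p (Real.exp w) := by
        exact_mod_cast bt_N_pos hmono hp1 hptop _ (Real.one_lt_exp_iff.2 hw)
      rw [Real.exp_neg, add_sub_cancel, inv_eq_one_div]
      gcongr)
    (by
      intro u
      rcases le_or_gt u 0 with hu | hu
      · have : (hfin u).toFinset = ∅ := by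
          ext i
          simp only [Set.Finite.mem_toFinset, Set.mem_ofPred_eq, Finset.notMem_empty, iff_false,
            not_lt]
          linarith [hvpos i]
        rw [this, max_eq_right hu]; simpa using hC'0
      · rw [max_eq_left hu.le]
        have h1 := hC' (Real.exp u) (Real.one_le_exp hu.le)
        rw [bt_identity hmono hp1 hptop, Real.log_exp] at h1
        have hs : (bt_finS hmono hp1 hptop (Real.exp u)).toFinset = (hfin u).toFinset := by
          ext i; simp [hviff]
        rw [hs] at h1
        have h2 : ∑ i ∈ (hfin u).toFinset,
            Real.log (p i.1) * beurlingN p (Real.exp u / p i.1 ^ (i.2 + 1)) =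
            Real.exp u * ∑ i ∈ (hfin u).toFinset, c i * (a + btE p a (u - v i)) := by
          rw [Finset.mul_sum]
          refine Finset.sum_congr rfl fun i hi => ?_
          simp only [Set.Finite.mem_toFinset, Set.mem_ofPred_eq] at hi
          have h3 : 0 < u - v i := by linarith
          simp only [btE, h3, if_true, c]
          rw [add_sub_cancel, Real.exp_sub, hvexp]
          have := pow_pos (hp0 i.1) (i.2 + 1)
          field_simp
        rw [h2] at h1
        have h4 : Real.exp u * ∑ i ∈ (hfin u).toFinset, c i * (a + btE p a (u - v i)) -
            a * Real.exp u * u = Real.exp u *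
            (∑ i ∈ (hfin u).toFinset, c i * (a + btE p a (u - v i)) - a * u) := by ring
        rw [h4, abs_mul, abs_of_pos (Real.exp_pos u), mul_comm C'] at h1
        exact le_of_mul_le_mul_left h1 (Real.exp_pos u))
  have hstep : ∀ x : ℝ, 0 < x → ∑ k ∈ (hfinP x).toFinset, Real.log (p k) ≤
      ∑ k ∈ (hfinP (x / Real.exp 1)).toFinset, Real.log (p k) + B * x := by
    intro x hx
    have hyx : x / Real.exp 1 ≤ x := by
      apply div_le_self hx.le; exact Real.one_le_exp (by norm_num)
    have hsub : (hfinP (x / Real.exp 1)).toFinset ⊆ (hfinP x).toFinset := by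
      intro k
      simp only [Set.Finite.mem_toFinset, Set.mem_ofPred_eq]
      intro h; linarith
    rw [← Finset.sum_sdiff hsub, add_comm]
    gcongr
    have h1 := hB (Real.log x - 1)
    rw [sub_add_cancel] at h1
    rw [← bt_interval v c hfin (hfin (Real.log x)).toFinset (Real.log x) (by simp) _ _
      (by linarith) le_rfl] at h1
    have h2 := mul_le_mul_of_nonneg_left h1 hx.le
    rw [mul_comm B]
    refine le_trans ?_ h2
    have key : ∀ k ∈ (hfinP x).toFinset \ (hfinP (x / Real.exp 1)).toFinset,
        v (k, 0) ∈ Set.Ico (Real.log x - 1) (Real.log x) ∧ p k ≤ x := by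
      intro k hk
      simp only [Finset.mem_sdiff, Set.Finite.mem_toFinset, Set.mem_ofPred_eq, not_lt] at hk
      refine ⟨⟨?_, ?_⟩, hk.1.le⟩
      · have := Real.log_le_log (by positivity) hk.2
        rw [Real.log_div hx.ne' (Real.exp_pos _).ne', Real.log_exp] at this
        simpa [v] using this
      · simpa [v] using Real.log_lt_log (hp0 k) hk.1
    calc ∑ k ∈ (hfinP x).toFinset \ (hfinP (x / Real.exp 1)).toFinset, Real.log (p k)
        ≤ ∑ k ∈ (hfinP x).toFinset \ (hfinP (x / Real.exp 1)).toFinset,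
          x * (c (k, 0) * (Set.Ico (Real.log x - 1) (Real.log x)).indicator (fun _ => (1:ℝ))
            (v (k, 0))) := by
          apply Finset.sum_le_sum
          intro k hk
          obtain ⟨h3, h4⟩ := key k hk
          rw [Set.indicator_of_mem h3]
          simp only [c, zero_add, pow_one, mul_one]
          rw [← mul_div_assoc, le_div_iff₀ (hp0 k), mul_comm]
          exact mul_le_mul_of_nonneg_right h4 (hlogp k).le
      _ = x * ∑ i ∈ ((hfinP x).toFinset \ (hfinP (x / Real.exp 1)).toFinset).image
            (fun k => ((k, 0) : ℕ × ℕ)), (c i *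
          (Set.Ico (Real.log x - 1) (Real.log x)).indicator (fun _ => (1:ℝ)) (v i)) := by
          rw [Finset.sum_image, Finset.mul_sum]
          intro k _ l _ h
          exact (Prod.mk.inj h).1
      _ ≤ _ := by
          apply mul_le_mul_of_nonneg_left _ hx.le
          apply Finset.sum_le_sum_of_subset_of_nonneg
          · intro i hi
            rw [Finset.mem_image] at hi
            obtain ⟨k, hk, rfl⟩ := hi
            simpa using (key k hk).1.2
          · intro i _ _
            exact mul_nonneg (hc i) (Set.indicator_nonneg (fun _ _ => zero_le_one) _)
  have hB0 : 0 ≤ B := by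
    refine le_trans ?_ (hB 0)
    rw [← bt_interval v c hfin (hfin (0 + 1)).toFinset (0 + 1) (by simp) _ _
      (by linarith) le_rfl]
    exact Finset.sum_nonneg fun i _ =>
      mul_nonneg (hc i) (Set.indicator_nonneg (fun _ _ => zero_le_one) _)
  refine ⟨2 * B, fun x hx => ?_⟩
  have main : ∀ m : ℕ, ∀ x : ℝ, 0 < x → x ≤ Real.exp m →
      ∑ k ∈ (hfinP x).toFinset, Real.log (p k) ≤ 2 * B * x := by
    intro m
    induction m with
    | zero =>
      intro x hx hxm
      have : (hfinP x).toFinset = ∅ := by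
        ext k
        simp only [Set.Finite.mem_toFinset, Set.mem_ofPred_eq, Finset.notMem_empty, iff_false,
          not_lt]
        have : x ≤ 1 := by simpa using hxm
        linarith [hp k]
      rw [this, Finset.sum_empty]; positivity
    | succ m ih =>
      intro x hx hxm
      have h1 := ih (x / Real.exp 1) (by positivity) (by
        rw [div_le_iff₀ (Real.exp_pos _), ← Real.exp_add]; exact_mod_cast hxm)
      have h5 : x / Real.exp 1 ≤ x / 2 := by
        apply div_le_div_of_nonneg_left hx.le (by norm_num)
        linarith [Real.add_one_le_exp 1]
      have h6 := mul_le_mul_of_nonneg_left h5 (by positivity : 0 ≤ 2 * B)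
      have := hstep x hx
      linarith
  obtain ⟨m, hm⟩ := exists_nat_ge (Real.log x)
  exact main m x hx (by rwa [← Real.log_le_iff_le_exp hx])

end Final

/-- **Theorem 1 (Chebyshev upper estimate for π).**
If `N(x) = ax + O(x/log x)` and `∫₁^∞ |N(x) - ax|/x² dx < ∞` for some `a > 0`,
then `π(x) log x / x` is bounded. -/
theorem chebyshev_upper_estimate_pi
    (p : ℕ → ℝ) (hmono : Monotone p) (hp1 : 1 < p 0) (hptop : Tendsto p atTop atTop)
    (a : ℝ) (ha : 0 < a)
    (hL1 : IntegrableOn (fun x : ℝ => ((beurlingN p x : ℝ) - a * x) / x ^ 2) (Set.Ici 1))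
    (C : ℝ) (hO : ∀ x : ℝ, 2 ≤ x → |(beurlingN p x : ℝ) - a * x| ≤ C * x / Real.log x) :
    ∃ B : ℝ, ∀ x : ℝ, 2 ≤ x → (beurlingPi p x : ℝ) * Real.log x / x ≤ B := by
  classical
  have hp := bt_pgt hmono hp1
  have hfinP : ∀ x, {k : ℕ | p k < x}.Finite := by
    intro x
    obtain ⟨K, hK⟩ := bt_finP hptop x
    exact (Finset.range K).finite_toSet.subset fun k hk => by simpa using hK k hk
  obtain ⟨B, hB⟩ := bt_theta hmono hp1 hptop a ha hL1 C hO hfinP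
  have hpi : ∀ x, beurlingPi p x = (hfinP x).toFinset.card := fun x => by
    rw [beurlingPi, Set.ncard_eq_toFinset_card _ (hfinP x)]
  have hl0 : 0 < Real.log (p 0) := Real.log_pos hp1
  have hB0 : 0 ≤ B := by
    have := hB 1 one_pos
    have h2 : 0 ≤ ∑ k ∈ (hfinP 1).toFinset, Real.log (p k) :=
      Finset.sum_nonneg fun k _ => (Real.log_pos (hp k)).le
    linarith
  -- a crude bound for `π`
  have hcrude : ∀ x : ℝ, 0 < x → (beurlingPi p x : ℝ) ≤ B / Real.log (p 0) * x := by
    intro x hx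
    rw [div_mul_eq_mul_div, le_div_iff₀ hl0]
    refine le_trans ?_ (hB x hx)
    rw [hpi, ← nsmul_eq_mul]
    apply Finset.card_nsmul_le_sum
    intro k _
    exact Real.log_le_log (by linarith) (hmono (Nat.zero_le k))
  refine ⟨2 * (B / Real.log (p 0)) + 2 * B, fun x hx => ?_⟩
  have hx0 : 0 < x := by linarith
  have hlx : 0 < Real.log x := Real.log_pos (by linarith)
  have hs : 0 < Real.sqrt x := Real.sqrt_pos.2 hx0
  have hss : Real.sqrt x * Real.sqrt x = x := Real.mul_self_sqrt hx0.le
  have hlogs : Real.log (Real.sqrt x) = Real.log x / 2 := Real.log_sqrt hx0.le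
  have hlogle : Real.log x ≤ 2 * Real.sqrt x := by
    have := Real.log_le_sub_one_of_pos hs
    linarith
  have hsx : Real.sqrt x ≤ x := by
    have : 1 ≤ Real.sqrt x := by rw [Real.one_le_sqrt]; linarith
    nlinarith
  have hsub : (hfinP (Real.sqrt x)).toFinset ⊆ (hfinP x).toFinset := by
    intro k
    simp only [Set.Finite.mem_toFinset, Set.mem_ofPred_eq]
    intro h; linarith
  have hcard := Finset.card_sdiff_add_card_eq_card hsub
  have h1 : (((hfinP x).toFinset \ (hfinP (Real.sqrt x)).toFinset).card : ℝ) * (Real.log x / 2) ≤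
      B * x := by
    refine le_trans ?_ (hB x hx0)
    rw [← nsmul_eq_mul]
    refine le_trans (Finset.card_nsmul_le_sum _ (fun k => Real.log (p k)) _ ?_)
      (Finset.sum_le_sum_of_subset_of_nonneg Finset.sdiff_subset
        (fun k _ _ => (Real.log_pos (hp k)).le))
    intro k hk
    simp only [Finset.mem_sdiff, Set.Finite.mem_toFinset, Set.mem_ofPred_eq, not_lt] at hk
    rw [← hlogs]
    exact Real.log_le_log hs hk.2
  have h2 := hcrude (Real.sqrt x) hs
  have h3 : (beurlingPi p x : ℝ) =
      (((hfinP x).toFinset \ (hfinP (Real.sqrt x)).toFinset).card : ℝ) +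
        beurlingPi p (Real.sqrt x) := by
    rw [hpi, hpi]; exact_mod_cast hcard.symm
  rw [div_le_iff₀ hx0, h3, add_mul]
  have h4 : (beurlingPi p (Real.sqrt x) : ℝ) * Real.log x ≤
      (B / Real.log (p 0) * Real.sqrt x) * (2 * Real.sqrt x) :=
    mul_le_mul h2 hlogle hlx.le (by positivity)
  have h5 : (B / Real.log (p 0) * Real.sqrt x) * (2 * Real.sqrt x) =
      2 * (B / Real.log (p 0)) * x := by
    rw [← hss]; ring_nf; rw [Real.sq_sqrt (by positivity)]
  nlinarith
end

section
/- Suppose a > 0, the L¹-condition ∫₁^∞ |N(x) − a·x| / x² dx < ∞ holds, and there is a constant C such that |N(x) − a·x| ≤ C·x / log x for all x ≥ 2. Then there is a constant B such that ψ(x) ≤ B·x for all x ≥ 1 (equivalently, limsup_{u→∞} e^{−u} ψ(e^u) < ∞). -/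
open MeasureTheory Real Filter Complex

/-- Chebyshev function `ψ(x) = ∑_{k, m ≥ 1, (p k)^m < x} log (p k)`. -/
noncomputable def beurlingPsi (p : ℕ → ℝ) (x : ℝ) : ℝ :=
  ∑' q : {q : ℕ × ℕ // 1 ≤ q.2 ∧ (p q.1) ^ q.2 < x}, Real.log (p (q : ℕ × ℕ).1)

/-- Counting function of a family of reals. -/
noncomputable def cntL {ι : Type*} (L : ι → ℝ) (u : ℝ) : ℝ := (Set.ncard {α | L α < u} : ℝ)

lemma cntL_nonneg {ι : Type*} (L : ι → ℝ) (u : ℝ) : 0 ≤ cntL L u := Nat.cast_nonneg _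

lemma cntL_mono {ι : Type*} {L : ι → ℝ} (hfin : ∀ u, {α | L α < u}.Finite) :
    Monotone (cntL L) := by
  intro u v huv
  unfold cntL
  exact_mod_cast Set.ncard_le_ncard (fun α (hα : L α < u) => lt_of_lt_of_le hα huv) (hfin v)

lemma abel_sum {ι : Type*} [Countable ι] {L : ι → ℝ} (hL0 : ∀ α, 0 ≤ L α)
    (hfin : ∀ u, {α | L α < u}.Finite) (F F' : ℝ → ℝ)
    (hF : ∀ u, HasDerivAt F (F' u) u) (hlim : Tendsto F atTop (nhds 0))
    (hintg : IntegrableOn F' (Set.Ioi 0))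
    (hint2 : IntegrableOn (fun u => F' u * cntL L u) (Set.Ioi 0)) :
    HasSum (fun α => F (L α)) (∫ u in Set.Ioi 0, -(F' u * cntL L u)) := by
  classical
  set G : ι → ℝ → ℝ := fun α => (Set.Ioi (L α)).indicator (fun u => -F' u) with hG
  have hGint : ∀ α, Integrable (G α) (volume.restrict (Set.Ioi 0)) := fun α =>
    Integrable.indicator hintg.neg measurableSet_Ioi
  have hGval : ∀ α, ∫ u in Set.Ioi 0, G α u = F (L α) := by
    intro α
    rw [hG]
    simp only
    rw [setIntegral_indicator measurableSet_Ioi]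
    have : Set.Ioi (0:ℝ) ∩ Set.Ioi (L α) = Set.Ioi (L α) := by
      rw [Set.inter_eq_right]; exact Set.Ioi_subset_Ioi (hL0 α)
    rw [this, integral_neg, integral_Ioi_of_hasDerivAt_of_tendsto' (fun x _ => hF x)
      (hintg.mono_set (Set.Ioi_subset_Ioi (hL0 α))) hlim]
    simp
  have hpt : ∀ u (f : ℝ → ℝ), HasSum (fun α => (Set.Ioi (L α)).indicator f u) (f u * cntL L u) := by
    intro u f
    have h1 : ∀ α ∉ (hfin u).toFinset, (Set.Ioi (L α)).indicator f u = 0 := by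
      intro α hα
      apply Set.indicator_of_notMem
      simpa using hα
    have h2 := hasSum_sum_of_ne_finset_zero (L := SummationFilter.unconditional ι) h1
    refine (congrArg (HasSum _) ?_).mpr h2
    rw [Finset.sum_congr rfl (g := fun _ => f u)]
    · rw [Finset.sum_const, nsmul_eq_mul, mul_comm, cntL, Set.ncard_eq_toFinset_card _ (hfin u)]
    · intro α hα
      apply Set.indicator_of_mem
      simpa using hα
  have hsum : Summable fun α => ∫ u in Set.Ioi 0, ‖G α u‖ := by
    apply summable_of_sum_le (c := ∫ u in Set.Ioi 0, ‖F' u * cntL L u‖)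
    · intro α; exact integral_nonneg fun u => norm_nonneg _
    · intro s
      rw [← integral_finsetSum _ (fun i _ => (hGint i).norm)]
      apply integral_mono_of_nonneg
      · exact Eventually.of_forall fun u => Finset.sum_nonneg fun i _ => norm_nonneg _
      · exact hint2.norm
      · refine Eventually.of_forall fun u => ?_
        have := hpt u (fun u => ‖F' u‖)
        simp only [norm_mul, Real.norm_of_nonneg (cntL_nonneg L u)]
        refine le_trans (le_of_eq ?_) (sum_le_hasSum s (fun i _ => ?_) this)
        · refine Finset.sum_congr rfl fun i _ => ?_
          simp only [hG, Set.indicator]; split_ifs <;> simp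
        · exact Set.indicator_nonneg (fun _ _ => norm_nonneg _) _
  have key := hasSum_integral_of_summable_integral_norm hGint hsum
  simp only [hGval] at key
  refine (congrArg (HasSum _) ?_).mpr key
  refine integral_congr_ae (Eventually.of_forall fun u => ?_)
  simp only
  rw [(hpt u (fun u => - F' u)).tsum_eq]
  ring

/-- A smooth positive kernel with slow logarithmic derivative. -/
lemma kernel_exists (l : ℝ) (h0 : 0 < l) (h1 : l ≤ 1) : ∃ φ φ1 φ2 : ℝ → ℝ,
    (∀ v, HasDerivAt φ (φ1 v) v) ∧ (∀ v, HasDerivAt φ1 (φ2 v) v) ∧ Continuous φ2 ∧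
    (∀ v, |φ1 v| ≤ l * φ v) ∧ (∀ v, |φ2 v| ≤ l * φ v) ∧
    (∀ v, Real.exp (-l * |v|) ≤ φ v) ∧ (∀ v, φ v ≤ 2 * Real.exp (-l * |v|)) := by
  have hc : ∀ v, 0 < Real.cosh (l * v) := fun v => Real.cosh_pos _
  have hcs : ∀ v, Real.cosh (l * v) ^ 2 = Real.sinh (l * v) ^ 2 + 1 := fun v => Real.cosh_sq _
  have hdc : ∀ v, HasDerivAt (fun v => Real.cosh (l * v)) (Real.sinh (l * v) * l) v := fun v => by
    exact (((hasDerivAt_id v).const_mul l).cosh).congr_deriv (by simp)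
  have hds : ∀ v, HasDerivAt (fun v => Real.sinh (l * v)) (Real.cosh (l * v) * l) v := fun v => by
    exact (((hasDerivAt_id v).const_mul l).sinh).congr_deriv (by simp)
  refine ⟨fun v => 1 / Real.cosh (l * v), fun v => - l * Real.sinh (l * v) / Real.cosh (l * v) ^ 2,
    fun v => l ^ 2 * (Real.sinh (l * v) ^ 2 - 1) / Real.cosh (l * v) ^ 3, ?_, ?_, ?_, ?_, ?_, ?_, ?_⟩
  · intro v
    refine ((hasDerivAt_const v (1:ℝ)).div (hdc v) (hc v).ne').congr_deriv ?_
    ring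
  · intro v
    refine (((hds v).const_mul (-l)).div ((hdc v).pow 2) (pow_pos (hc v) 2).ne').congr_deriv ?_
    have := (hc v).ne'
    field_simp
    have h2 := hcs v
    simp
    linear_combination (-Real.cosh (l*v) ^ 4) * h2
  · refine Continuous.div (by fun_prop) (by fun_prop) fun v => (pow_pos (hc v) 3).ne'
  · intro v
    have hs : |Real.sinh (l * v)| ≤ Real.cosh (l * v) := by
      apply abs_le_of_sq_le_sq _ (hc v).le
      linarith [hcs v]
    rw [abs_div, abs_mul, abs_neg, abs_of_pos h0, abs_of_pos (pow_pos (hc v) 2),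
      div_le_iff₀ (pow_pos (hc v) 2)]
    have := (hc v).ne'
    field_simp
    exact hs
  · intro v
    rw [abs_div, abs_mul, abs_of_pos (pow_pos h0 2), abs_of_pos (pow_pos (hc v) 3),
      div_le_iff₀ (pow_pos (hc v) 3)]
    have := (hc v).ne'
    have e : l * (1 / Real.cosh (l * v)) * Real.cosh (l * v) ^ 3 = l * Real.cosh (l * v) ^ 2 := by
      field_simp
    rw [e]
    have : |Real.sinh (l * v) ^ 2 - 1| ≤ Real.cosh (l * v) ^ 2 := by
      rw [abs_le, hcs]; constructor <;> nlinarith [sq_nonneg (Real.sinh (l*v))]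
    have h2 : l ^ 2 ≤ l := by nlinarith
    exact mul_le_mul h2 this (abs_nonneg _) h0.le
  · intro v
    have : Real.cosh (l * v) = (Real.exp (l * |v|) + Real.exp (-(l * |v|))) / 2 := by
      rw [← Real.cosh_eq, ← Real.cosh_abs, abs_mul, abs_of_pos h0]
    simp only
    rw [this, le_div_iff₀ (by positivity), neg_mul, Real.exp_neg]
    have h3 : 1 ≤ Real.exp (l * |v|) := Real.one_le_exp (by positivity)
    have h4 : (Real.exp (l * |v|))⁻¹ ≤ 1 := inv_le_one_of_one_le₀ h3
    have h5 : 0 < (Real.exp (l * |v|))⁻¹ := by positivity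
    have h6 : (Real.exp (l * |v|))⁻¹ * Real.exp (l * |v|) = 1 := inv_mul_cancel₀ (by positivity)
    nlinarith
  · intro v
    have : Real.cosh (l * v) = (Real.exp (l * |v|) + Real.exp (-(l * |v|))) / 2 := by
      rw [← Real.cosh_eq, ← Real.cosh_abs, abs_mul, abs_of_pos h0]
    simp only
    rw [this, div_le_iff₀ (by positivity), neg_mul, Real.exp_neg]
    have h5 : 0 < (Real.exp (l * |v|))⁻¹ := by positivity
    have h6 : (Real.exp (l * |v|))⁻¹ * Real.exp (l * |v|) = 1 := inv_mul_cancel₀ (by positivity)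
    nlinarith
/-- Logarithm of a generalized integer. -/
noncomputable def bL (p : ℕ → ℝ) (α : ℕ →₀ ℕ) : ℝ := α.sum fun k e => (e : ℝ) * Real.log (p k)

lemma bL_add (p : ℕ → ℝ) (α β : ℕ →₀ ℕ) : bL p (α + β) = bL p α + bL p β := by
  unfold bL
  apply Finsupp.sum_add_index'
  · intro k; simp
  · intro k a b; push_cast; ring

lemma bL_single (p : ℕ → ℝ) (k m : ℕ) : bL p (Finsupp.single k m) = m * Real.log (p k) := by
  unfold bL
  rw [Finsupp.sum_single_index]; simp

lemma bInt_eq {p : ℕ → ℝ} (hp : ∀ k, 1 < p k) (α : ℕ →₀ ℕ) :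
    beurlingInt p α = Real.exp (bL p α) := by
  unfold beurlingInt bL
  rw [Finsupp.sum, Real.exp_sum, Finsupp.prod]
  refine Finset.prod_congr rfl fun k _ => ?_
  rw [Real.exp_nat_mul, Real.exp_log (by linarith [hp k])]

lemma bL_nonneg {p : ℕ → ℝ} (hp : ∀ k, 1 < p k) (α : ℕ →₀ ℕ) : 0 ≤ bL p α :=
  Finset.sum_nonneg fun k _ => mul_nonneg (Nat.cast_nonneg _) (Real.log_pos (hp k)).le

lemma bL_ge {p : ℕ → ℝ} (hp : ∀ k, 1 < p k) (α : ℕ →₀ ℕ) (k : ℕ) :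
    α k * Real.log (p k) ≤ bL p α := by
  by_cases hk : k ∈ α.support
  · exact Finset.single_le_sum (f := fun k => (α k : ℝ) * Real.log (p k))
      (fun k _ => mul_nonneg (Nat.cast_nonneg _) (Real.log_pos (hp k)).le) hk
  · have : α k = 0 := by simpa using hk
    rw [this]; simpa using bL_nonneg hp α

lemma bL_finite {p : ℕ → ℝ} (hmono : Monotone p) (hp : ∀ k, 1 < p k)
    (hptop : Tendsto p atTop atTop) (u : ℝ) : {α | bL p α < u}.Finite := by
  classical
  obtain ⟨K, hK⟩ := eventually_atTop.1 (hptop.eventually_ge_atTop (Real.exp u))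
  have hl0 : 0 < Real.log (p 0) := Real.log_pos (hp 0)
  obtain ⟨m, hm⟩ := exists_nat_ge (u / Real.log (p 0))
  rw [div_le_iff₀ hl0] at hm
  have : {α | bL p α < u} ⊆ Set.Iic (∑ k ∈ Finset.range K, Finsupp.single k m) := by
    intro α hα k
    have hα : bL p α < u := hα
    have hge := bL_ge hp α k
    have hlk : Real.log (p 0) ≤ Real.log (p k) :=
      Real.log_le_log (by linarith [hp 0]) (hmono (Nat.zero_le k))
    rw [Finsupp.finsetSum_apply]
    by_cases hk : k < K
    · have h1 : (∑ i ∈ Finset.range K, (Finsupp.single i m : ℕ →₀ ℕ) k) = m := by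
        rw [Finset.sum_eq_single k]
        · simp
        · intro b _ hb; simp [hb]
        · intro h; simp at h; omega
      rw [h1]
      by_contra hcon
      push Not at hcon
      have : (m:ℝ) ≤ α k := by exact_mod_cast hcon.le
      have : (m:ℝ) * Real.log (p 0) ≤ α k * Real.log (p k) := by gcongr
      linarith
    · have h2 : u ≤ Real.log (p k) := by
        rw [Real.le_log_iff_exp_le (by linarith [hp k])]
        exact hK k (by omega)
      have : α k = 0 := by
        by_contra hne
        have h3 : (1:ℝ) ≤ α k := by exact_mod_cast Nat.one_le_iff_ne_zero.2 hne
        nlinarith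
      rw [this]; exact Nat.zero_le _
  exact (Set.finite_Iic _).subset this

lemma bL_fiber (p : ℕ → ℝ) (α : ℕ →₀ ℕ) (c : ℝ) :
    HasSum (fun j : ℕ × ℕ => if j.2 + 1 ≤ α j.1 then Real.log (p j.1) * c else 0) (bL p α * c) := by
  classical
  set n := α.support.sup α with hn
  have h1 : ∀ j ∉ α.support ×ˢ Finset.range n,
      (if j.2 + 1 ≤ α j.1 then Real.log (p j.1) * c else 0) = 0 := by
    intro j hj
    rw [if_neg]
    intro h
    apply hj
    have hs : j.1 ∈ α.support := by simp; omega
    have := Finset.le_sup (f := α) hs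
    simp only [Finset.mem_product, Finset.mem_range]
    exact ⟨hs, by omega⟩
  refine (congrArg (HasSum _) ?_).mpr (hasSum_sum_of_ne_finset_zero
    (L := SummationFilter.unconditional _) h1)
  rw [Finset.sum_product, bL, Finsupp.sum, Finset.sum_mul]
  refine Finset.sum_congr rfl fun k hk => ?_
  have := Finset.le_sup (f := α) hk
  simp only
  rw [← Finset.sum_filter]
  have h3 : (Finset.range n).filter (fun m => m + 1 ≤ α k) = Finset.range (α k) := by
    ext m; simp; omega
  rw [h3]; simp; ring

lemma bL_conv {p : ℕ → ℝ} (hp : ∀ k, 1 < p k) (f : ℝ → ℝ) (T : ℝ)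
    (hf : HasSum (fun α : ℕ →₀ ℕ => bL p α * f (bL p α)) T) :
    HasSum (fun x : (ℕ × ℕ) × (ℕ →₀ ℕ) =>
      Real.log (p x.1.1) * f ((x.1.2 + 1 : ℕ) * Real.log (p x.1.1) + bL p x.2)) T := by
  classical
  set g : (ℕ →₀ ℕ) × (ℕ × ℕ) → ℝ := fun x =>
    if x.2.2 + 1 ≤ x.1 x.2.1 then Real.log (p x.2.1) * f (bL p x.1) else 0 with hg
  have habs : Summable fun x => |g x| := by
    have hfib : ∀ α, HasSum (fun j => |g (α, j)|) (bL p α * |f (bL p α)|) := by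
      intro α
      convert bL_fiber p α |f (bL p α)| using 2 with j
      simp only [hg]
      split_ifs
      · rw [abs_mul, abs_of_pos (Real.log_pos (hp _))]
      · simp
    rw [summable_prod_of_nonneg (fun x => abs_nonneg _)]
    refine ⟨fun α => (hfib α).summable, ?_⟩
    simp only [fun α => (hfib α).tsum_eq]
    refine hf.summable.abs.congr fun α => ?_
    rw [abs_mul, abs_of_nonneg (bL_nonneg hp α)]
  have hgs : Summable g := habs.of_abs
  have hgT : HasSum g T := by
    have h := hgs.hasSum.prod_fiberwise (fun α => bL_fiber p α (f (bL p α)))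
    rw [hf.unique h]; exact hgs.hasSum
  set i : (ℕ × ℕ) × (ℕ →₀ ℕ) → (ℕ →₀ ℕ) × (ℕ × ℕ) := fun x =>
    (x.2 + Finsupp.single x.1.1 (x.1.2 + 1), x.1) with hi
  have hinj : Function.Injective i := by
    rintro ⟨j, β⟩ ⟨j', β'⟩ h
    simp only [hi, Prod.mk.injEq] at h
    obtain ⟨h1, rfl⟩ := h
    simpa using h1
  have hr : ∀ x ∉ Set.range i, g x = 0 := by
    rintro ⟨α, k, m⟩ hx
    simp only [hg]
    rw [if_neg]
    intro hle
    apply hx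
    refine ⟨((k, m), α - Finsupp.single k (m + 1)), ?_⟩
    simp only [hi, Prod.mk.injEq, and_true]
    exact tsub_add_cancel_of_le (Finsupp.single_le_iff.2 hle)
  have := (hinj.hasSum_iff hr).2 hgT
  convert this using 2 with x
  simp only [hg, hi, Function.comp]
  rw [if_pos (by simp), bL_add, bL_single, add_comm]
lemma dom_int {b c C0 : ℝ} (hb : 0 < b) {K D : ℝ → ℝ} (hK : Continuous K) (hD : Measurable D)
    (hKb : ∀ u, 0 < u → |K u| ≤ c * Real.exp (-b * u)) (hDb : ∀ u, 0 < u → |D u| ≤ C0) :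
    IntegrableOn (fun u => K u * D u) (Set.Ioi 0) := by
  refine Integrable.mono' (g := fun u => c * Real.exp (-b * u) * C0) ?_ ?_ ?_
  · exact ((exp_neg_integrableOn_Ioi 0 hb).const_mul c).mul_const C0
  · exact (hK.measurable.mul hD).aestronglyMeasurable
  · refine (ae_restrict_iff' measurableSet_Ioi).2 (Eventually.of_forall fun u hu => ?_)
    rw [Real.norm_eq_abs, abs_mul]
    exact mul_le_mul (hKb u hu) (hDb u hu) (abs_nonneg _) ((abs_nonneg _).trans (hKb u hu))

lemma dom_int1 {b c : ℝ} (hb : 0 < b) {K : ℝ → ℝ} (hK : Continuous K)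
    (hKb : ∀ u, 0 < u → |K u| ≤ c * Real.exp (-b * u)) :
    IntegrableOn K (Set.Ioi 0) := by
  have := dom_int (D := fun _ => 1) (C0 := 1) hb hK measurable_const hKb (by simp)
  simpa using this

lemma dom_tendsto {b c : ℝ} (hb : 0 < b) {K : ℝ → ℝ}
    (hKb : ∀ u, 0 < u → |K u| ≤ c * Real.exp (-b * u)) :
    Tendsto K atTop (nhds 0) := by
  have h1 : Tendsto (fun u : ℝ => c * Real.exp (-b * u)) atTop (nhds 0) := by
    have : Tendsto (fun u : ℝ => Real.exp (-b * u)) atTop (nhds 0) :=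
      Real.tendsto_exp_atBot.comp (tendsto_id.const_mul_atTop_of_neg (by linarith))
    simpa using this.const_mul c
  refine squeeze_zero_norm' ?_ h1
  filter_upwards [eventually_gt_atTop 0] with u hu using hKb u hu

lemma abel2 {ι : Type*} [Countable ι] {L : ι → ℝ} (hL0 : ∀ α, 0 ≤ L α)
    (hfin : ∀ u, {α | L α < u}.Finite) {b c c' C0 : ℝ} (hb : 0 < b)
    (hD : ∀ u, 0 < u → |Real.exp (-u) * cntL L u| ≤ C0)
    (K K' : ℝ → ℝ) (hK : ∀ u, HasDerivAt K (K' u) u) (hK' : Continuous K')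
    (hKb : ∀ u, 0 < u → |K u| ≤ c * Real.exp (-b * u))
    (hKb' : ∀ u, 0 < u → |K' u| ≤ c' * Real.exp (-b * u)) :
    IntegrableOn (fun u => (K u - K' u) * (Real.exp (-u) * cntL L u)) (Set.Ioi 0) ∧
    HasSum (fun α => Real.exp (-L α) * K (L α))
      (∫ u in Set.Ioi 0, (K u - K' u) * (Real.exp (-u) * cntL L u)) := by
  have hKc : Continuous K := continuous_iff_continuousAt.2 fun u => (hK u).continuousAt
  have hm : Measurable (fun u => Real.exp (-u) * cntL L u) :=
    (by fun_prop : Measurable fun u : ℝ => Real.exp (-u)).mul (cntL_mono hfin).measurable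
  have hdb : ∀ u, 0 < u → |K u - K' u| ≤ (c + c') * Real.exp (-b * u) := fun u hu => by
    rw [add_mul]
    exact (abs_sub _ _).trans (add_le_add (hKb u hu) (hKb' u hu))
  have hi := dom_int hb (hKc.sub hK') hm hdb hD
  refine ⟨hi, ?_⟩
  have he : ∀ u : ℝ, 0 < u → Real.exp (-u) ≤ 1 := fun u hu => by
    rw [Real.exp_le_one_iff]; linarith
  have := abel_sum hL0 hfin (fun u => Real.exp (-u) * K u)
    (fun u => -(Real.exp (-u) * (K u - K' u))) ?_ ?_ ?_ ?_
  · refine (congrArg (HasSum _) ?_).mpr this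
    refine integral_congr_ae (Eventually.of_forall fun u => ?_)
    simp only; ring
  · intro u
    refine ((hasDerivAt_neg u).exp.mul (hK u)).congr_deriv ?_
    ring
  · refine dom_tendsto hb (c := c) fun u hu => ?_
    rw [abs_mul, abs_of_pos (Real.exp_pos _)]
    exact (mul_le_of_le_one_left (abs_nonneg _) (he u hu)).trans (hKb u hu)
  · refine dom_int1 hb (c := c + c') (by fun_prop) fun u hu => ?_
    rw [abs_neg, abs_mul, abs_of_pos (Real.exp_pos _)]
    exact (mul_le_of_le_one_left (abs_nonneg _) (he u hu)).trans (hdb u hu)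
  · refine hi.neg.congr (Eventually.of_forall fun u => ?_)
    simp only [Pi.neg_apply, Pi.sub_apply]; ring

lemma phi_bd {l : ℝ} (hl : 0 < l) {φ : ℝ → ℝ}
    (hφ : ∀ v, φ v ≤ 2 * Real.exp (-l * |v|)) (h : ℝ) :
    ∀ u, 0 < u → (1 + u) * φ (h - u) ≤
      ((1 + 2 / l) * (2 * Real.exp (l * h))) * Real.exp (-(l/2) * u) := by
  intro u hu
  have h1 : 1 + u ≤ (1 + 2 / l) * Real.exp (l / 2 * u) := by
    have e1 : 1 ≤ Real.exp (l / 2 * u) := Real.one_le_exp (by positivity)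
    have e2 : l / 2 * u ≤ Real.exp (l / 2 * u) := by linarith [Real.add_one_le_exp (l / 2 * u)]
    have e3 : u = 2 / l * (l / 2 * u) := by field_simp
    have e4 : 2 / l * (l / 2 * u) ≤ 2 / l * Real.exp (l / 2 * u) := by gcongr
    linarith
  have h2 : φ (h - u) ≤ 2 * Real.exp (l * h) * Real.exp (-l * u) := by
    refine (hφ _).trans ?_
    rw [mul_assoc, ← Real.exp_add]
    gcongr
    nlinarith [neg_abs_le (h - u)]
  calc (1 + u) * φ (h - u) ≤ (1 + u) * (2 * Real.exp (l * h) * Real.exp (-l * u)) := by gcongr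
    _ ≤ ((1 + 2 / l) * Real.exp (l / 2 * u)) * (2 * Real.exp (l * h) * Real.exp (-l * u)) := by
        gcongr
    _ = ((1 + 2 / l) * (2 * Real.exp (l * h))) * (Real.exp (l / 2 * u) * Real.exp (-l * u)) := by
        ring
    _ = _ := by rw [← Real.exp_add]; congr 2; ring

lemma phi_integrable {l : ℝ} (hl : 0 < l) {φ : ℝ → ℝ} (hc : Continuous φ)
    (hφ0 : ∀ v, 0 < φ v)
    (hφ : ∀ v, φ v ≤ 2 * Real.exp (-l * |v|)) : Integrable φ := by
  have h1 : IntegrableOn φ (Set.Ioi 0) := by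
    refine dom_int1 hl hc (c := 2) fun u hu => ?_
    have := hφ u
    rw [abs_of_pos hu] at this
    rwa [abs_of_pos (hφ0 u)]
  have h3 : IntegrableOn φ (Set.Iic 0) := by
    refine Integrable.mono' ((integrableOn_exp_mul_Iic hl 0).const_mul 2)
      hc.aestronglyMeasurable ?_
    refine (ae_restrict_iff' measurableSet_Iic).2 (Eventually.of_forall fun u hu => ?_)
    have := hφ u
    rw [abs_of_nonpos hu] at this
    rw [Real.norm_eq_abs, abs_of_pos (hφ0 _)]
    simpa using this
  rw [← integrableOn_univ, ← Set.Iic_union_Ioi (a := (0:ℝ))]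
  exact h3.union h1

/-- The setup used for the analytic estimates. -/
structure KernelData (l : ℝ) (φ φ1 φ2 : ℝ → ℝ) : Prop where
  l0 : 0 < l
  l1 : l ≤ 1
  d1 : ∀ v, HasDerivAt φ (φ1 v) v
  d2 : ∀ v, HasDerivAt φ1 (φ2 v) v
  c2 : Continuous φ2
  b1 : ∀ v, |φ1 v| ≤ l * φ v
  b2 : ∀ v, |φ2 v| ≤ l * φ v
  lo : ∀ v, Real.exp (-l * |v|) ≤ φ v
  hi : ∀ v, φ v ≤ 2 * Real.exp (-l * |v|)

lemma KernelData.pos {l : ℝ} {φ φ1 φ2 : ℝ → ℝ} (k : KernelData l φ φ1 φ2) (v : ℝ) : 0 < φ v :=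
  (Real.exp_pos _).trans_le (k.lo v)

lemma KernelData.c0 {l : ℝ} {φ φ1 φ2 : ℝ → ℝ} (k : KernelData l φ φ1 φ2) : Continuous φ :=
  continuous_iff_continuousAt.2 fun u => (k.d1 u).continuousAt

lemma KernelData.c1 {l : ℝ} {φ φ1 φ2 : ℝ → ℝ} (k : KernelData l φ φ1 φ2) : Continuous φ1 :=
  continuous_iff_continuousAt.2 fun u => (k.d2 u).continuousAt

lemma KernelData.bd {l : ℝ} {φ φ1 φ2 : ℝ → ℝ} (k : KernelData l φ φ1 φ2) (h : ℝ) :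
    ∃ c, ∀ u, 0 < u → (1 + u) * φ (h - u) ≤ c * Real.exp (-(l/2) * u) :=
  ⟨_, phi_bd k.l0 k.hi h⟩

lemma KernelData.D1 {l : ℝ} {φ φ1 φ2 : ℝ → ℝ} (k : KernelData l φ φ1 φ2) (h u : ℝ) :
    HasDerivAt (fun u => φ (h - u)) (-φ1 (h - u)) u :=
  HasDerivAt.comp_const_sub h u (k.d1 (h - u))

lemma KernelData.D2 {l : ℝ} {φ φ1 φ2 : ℝ → ℝ} (k : KernelData l φ φ1 φ2) (h u : ℝ) :
    HasDerivAt (fun u => φ1 (h - u)) (-φ2 (h - u)) u :=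
  HasDerivAt.comp_const_sub h u (k.d2 (h - u))

lemma A1 {ι : Type*} [Countable ι] {L : ι → ℝ} (hL0 : ∀ α, 0 ≤ L α)
    (hfin : ∀ u, {α | L α < u}.Finite) {a C0 : ℝ} (ha : 0 < a) {R : ℝ → ℝ}
    (hR : ∀ u, Real.exp (-u) * cntL L u = a + R u)
    (hRi : IntegrableOn R (Set.Ioi 0))
    (hRb : ∀ u, 0 < u → (1 + u) * |R u| ≤ C0)
    {l : ℝ} {φ φ1 φ2 : ℝ → ℝ} (k : KernelData l φ φ1 φ2) (y : ℝ) :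
    IntegrableOn (fun u => φ (y - u) * |R u|) (Set.Ioi 0) ∧
    ∃ T, HasSum (fun α => Real.exp (-L α) * φ1 (y - L α)) T ∧
      a * φ y ≤ T + a * l * φ y + 2 * l * ∫ u in Set.Ioi 0, φ (y - u) * |R u| := by
  obtain ⟨c, hc⟩ := k.bd y
  have hl := k.l0
  have hc0 := k.c0
  have hc1 := k.c1
  have hc2 := k.c2
  have hb : 0 < l / 2 := by linarith
  have hRb' : ∀ u, 0 < u → |R u| ≤ C0 := fun u hu => by
    have := hRb u hu
    nlinarith [abs_nonneg (R u)]
  have hφb : ∀ u, 0 < u → |φ (y - u)| ≤ c * Real.exp (-(l/2) * u) := fun u hu => by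
    rw [abs_of_pos (k.pos _)]
    have := hc u hu
    nlinarith [k.pos (y - u)]
  have h1b : ∀ u, 0 < u → |φ1 (y - u)| ≤ c * Real.exp (-(l/2) * u) := fun u hu => by
    have := hφb u hu
    rw [abs_of_pos (k.pos _)] at this
    nlinarith [k.b1 (y - u), k.l1, k.pos (y - u)]
  have h2b : ∀ u, 0 < u → |-φ2 (y - u)| ≤ c * Real.exp (-(l/2) * u) := fun u hu => by
    have := hφb u hu
    rw [abs_of_pos (k.pos _)] at this
    rw [abs_neg]
    nlinarith [k.b2 (y - u), k.l1, k.pos (y - u)]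
  have hRm : Measurable R := by
    have hm : Measurable (fun u => Real.exp (-u) * cntL L u) :=
      (by fun_prop : Measurable fun u : ℝ => Real.exp (-u)).mul (cntL_mono hfin).measurable
    have : R = fun u => Real.exp (-u) * cntL L u - a := by ext u; rw [hR]; ring
    rw [this]; exact hm.sub_const a
  have hI0 : IntegrableOn (fun u => φ (y - u) * |R u|) (Set.Ioi 0) :=
    dom_int hb (by fun_prop) hRm.abs hφb (C0 := C0) (by simpa using hRb')
  refine ⟨hI0, _, (abel2 hL0 hfin (C0 := a + C0) hb ?_ (fun u => φ1 (y - u)) (fun u => -φ2 (y - u))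
    (k.D2 y) (by fun_prop) h1b h2b).2, ?_⟩
  · intro u hu
    rw [hR]
    exact (abs_add_le _ _).trans (add_le_add (abs_of_pos ha).le (hRb' u hu))
  simp only [hR]
  have hI1 := dom_int1 hb (K := fun u => φ1 (y - u)) (by fun_prop) h1b
  have hI2 := dom_int1 hb (K := fun u => -φ2 (y - u)) (by fun_prop) h2b
  have hJ1 := dom_int hb (K := fun u => φ1 (y - u)) (by fun_prop) hRm h1b hRb'
  have hJ2 := dom_int hb (K := fun u => -φ2 (y - u)) (by fun_prop) hRm h2b hRb'
  have e1 : ∫ u in Set.Ioi 0, -φ1 (y - u) = 0 - φ (y - 0) :=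
    integral_Ioi_of_hasDerivAt_of_tendsto' (fun u _ => k.D1 y u) hI1.neg (dom_tendsto hb hφb)
  have e2 : ∫ u in Set.Ioi 0, -φ2 (y - u) = 0 - φ1 (y - 0) :=
    integral_Ioi_of_hasDerivAt_of_tendsto' (fun u _ => k.D2 y u) hI2 (dom_tendsto hb h1b)
  have e3 : ∫ u in Set.Ioi 0, (φ1 (y - u) - -φ2 (y - u)) * (a + R u) =
      a * (φ y + φ1 y) + ∫ u in Set.Ioi 0, (φ1 (y - u) * R u - -φ2 (y - u) * R u) := by
    have : ∀ u, (φ1 (y - u) - -φ2 (y - u)) * (a + R u) =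
      a * (φ1 (y - u) - -φ2 (y - u)) + (φ1 (y - u) * R u - -φ2 (y - u) * R u) := fun u => by ring
    simp only [this]
    have hS : IntegrableOn (fun u => a * (φ1 (y - u) - -φ2 (y - u))) (Set.Ioi 0) :=
      (hI1.sub hI2).const_mul a
    have hS' : IntegrableOn (fun u => φ1 (y - u) * R u - -φ2 (y - u) * R u) (Set.Ioi 0) :=
      hJ1.sub hJ2
    rw [integral_add hS hS', integral_const_mul, integral_sub hI1 hI2, e2]
    rw [integral_neg] at e1
    rw [neg_eq_iff_eq_neg.1 e1]
    simp
  rw [e3]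
  have e4 : |∫ u in Set.Ioi 0, (φ1 (y - u) * R u - -φ2 (y - u) * R u)| ≤
      2 * l * ∫ u in Set.Ioi 0, φ (y - u) * |R u| := by
    rw [← integral_const_mul, ← Real.norm_eq_abs]
    refine norm_integral_le_of_norm_le (hI0.const_mul _) (Eventually.of_forall fun u => ?_)
    have : φ1 (y - u) * R u - -φ2 (y - u) * R u = (φ1 (y - u) + φ2 (y - u)) * R u := by ring
    rw [this, Real.norm_eq_abs, abs_mul, ← mul_assoc]
    gcongr
    refine (abs_add_le _ _).trans ?_
    linarith [k.b1 (y - u), k.b2 (y - u)]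
  have := neg_abs_le (∫ u in Set.Ioi 0, (φ1 (y - u) * R u - -φ2 (y - u) * R u))
  have h5 := neg_abs_le (φ1 y)
  have h6 := k.b1 y
  nlinarith

lemma A2 {ι : Type*} [Countable ι] {L : ι → ℝ} (hL0 : ∀ α, 0 ≤ L α)
    (hfin : ∀ u, {α | L α < u}.Finite) {a C0 : ℝ} (ha : 0 < a) {R : ℝ → ℝ}
    (hR : ∀ u, Real.exp (-u) * cntL L u = a + R u)
    (hRb : ∀ u, 0 < u → (1 + u) * |R u| ≤ C0)
    {l : ℝ} {φ φ1 φ2 : ℝ → ℝ} (k : KernelData l φ φ1 φ2) :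
    ∃ B, ∀ h, ∃ T, HasSum (fun α => L α * (Real.exp (-L α) * φ1 (h - L α))) T ∧ T ≤ B := by
  have hc0 := k.c0
  have hφi := phi_integrable k.l0 k.c0 k.pos k.hi
  refine ⟨a * (∫ v, φ v) + 2 * C0 * ∫ v, φ v, fun h => ?_⟩
  obtain ⟨c, hc⟩ := k.bd h
  have hl := k.l0
  have hc1 := k.c1
  have hc2 := k.c2
  have hb : 0 < l / 2 := by linarith
  have hRb' : ∀ u, 0 < u → |R u| ≤ C0 := fun u hu => by
    have := hRb u hu
    nlinarith [abs_nonneg (R u)]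
  have hφb : ∀ u, 0 < u → |φ (h - u)| ≤ c * Real.exp (-(l/2) * u) := fun u hu => by
    rw [abs_of_pos (k.pos _)]
    have := hc u hu
    nlinarith [k.pos (h - u)]
  have hb1 : ∀ v, |φ1 v| ≤ φ v := fun v => by nlinarith [k.b1 v, k.l1, k.pos v]
  have hb2 : ∀ v, |φ2 v| ≤ φ v := fun v => by nlinarith [k.b2 v, k.l1, k.pos v]
  have huφ : ∀ u, 0 < u → |u * φ (h - u)| ≤ c * Real.exp (-(l/2) * u) := fun u hu => by
    rw [abs_mul, abs_of_pos (k.pos _), abs_of_pos hu]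
    nlinarith [hc u hu, k.pos (h - u)]
  have h1b : ∀ u, 0 < u → |u * φ1 (h - u)| ≤ c * Real.exp (-(l/2) * u) := fun u hu => by
    rw [abs_mul, abs_of_pos hu]
    nlinarith [hc u hu, k.pos (h - u), hb1 (h - u)]
  have h2b : ∀ u, 0 < u → |φ1 (h - u) - u * φ2 (h - u)| ≤ c * Real.exp (-(l/2) * u) :=
    fun u hu => by
      refine (abs_sub _ _).trans ?_
      rw [abs_mul, abs_of_pos hu]
      nlinarith [hc u hu, k.pos (h - u), hb1 (h - u), hb2 (h - u)]
  have hRm : Measurable R := by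
    have hm : Measurable (fun u => Real.exp (-u) * cntL L u) :=
      (by fun_prop : Measurable fun u : ℝ => Real.exp (-u)).mul (cntL_mono hfin).measurable
    have : R = fun u => Real.exp (-u) * cntL L u - a := by ext u; rw [hR]; ring
    rw [this]; exact hm.sub_const a
  have hd : ∀ u, HasDerivAt (fun u => u * φ1 (h - u)) (φ1 (h - u) - u * φ2 (h - u)) u := fun u =>
    ((hasDerivAt_id u).mul (k.D2 h u)).congr_deriv (by simp; ring)
  have hd0 : ∀ u, HasDerivAt (fun u => u * φ (h - u)) (φ (h - u) - u * φ1 (h - u)) u := fun u =>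
    ((hasDerivAt_id u).mul (k.D1 h u)).congr_deriv (by simp; ring)
  have key := (abel2 hL0 hfin (C0 := a + C0) hb ?_ (fun u => u * φ1 (h - u)) _
    hd (by fun_prop) h1b h2b).2
  swap
  · intro u hu
    rw [hR]
    exact (abs_add_le _ _).trans (add_le_add (abs_of_pos ha).le (hRb' u hu))
  have ef : (fun α => L α * (Real.exp (-L α) * φ1 (h - L α))) =
      fun α => Real.exp (-L α) * (L α * φ1 (h - L α)) := by ext α; ring
  rw [ef]
  refine ⟨_, key, ?_⟩
  simp only [hR]
  have hI0 := dom_int1 hb (K := fun u => φ (h - u)) (by fun_prop) hφb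
  have hI1 := dom_int1 hb (K := fun u => u * φ1 (h - u)) (by fun_prop) h1b
  have hI2 := dom_int1 hb (K := fun u => φ1 (h - u) - u * φ2 (h - u)) (by fun_prop) h2b
  have hJ1 := dom_int hb (K := fun u => u * φ1 (h - u)) (by fun_prop) hRm h1b hRb'
  have hJ2 := dom_int hb (K := fun u => φ1 (h - u) - u * φ2 (h - u)) (by fun_prop) hRm h2b hRb'
  have e1 : ∫ u in Set.Ioi 0, (φ (h - u) - u * φ1 (h - u)) = 0 - 0 * φ (h - 0) :=
    integral_Ioi_of_hasDerivAt_of_tendsto' (fun u _ => hd0 u) (hI0.sub hI1) (dom_tendsto hb huφ)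
  have e2 : ∫ u in Set.Ioi 0, (φ1 (h - u) - u * φ2 (h - u)) = 0 - 0 * φ1 (h - 0) :=
    integral_Ioi_of_hasDerivAt_of_tendsto' (fun u _ => hd u) hI2 (dom_tendsto hb h1b)
  have e3 : ∫ u in Set.Ioi 0, (u * φ1 (h - u) - (φ1 (h - u) - u * φ2 (h - u))) * (a + R u) =
      a * (∫ u in Set.Ioi 0, φ (h - u)) + ∫ u in Set.Ioi 0,
        (u * φ1 (h - u) * R u - (φ1 (h - u) - u * φ2 (h - u)) * R u) := by
    have : ∀ u, (u * φ1 (h - u) - (φ1 (h - u) - u * φ2 (h - u))) * (a + R u) =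
      a * (u * φ1 (h - u) - (φ1 (h - u) - u * φ2 (h - u))) +
        (u * φ1 (h - u) * R u - (φ1 (h - u) - u * φ2 (h - u)) * R u) := fun u => by ring
    simp only [this]
    have hS : IntegrableOn (fun u => a * (u * φ1 (h - u) - (φ1 (h - u) - u * φ2 (h - u))))
      (Set.Ioi 0) := (hI1.sub hI2).const_mul a
    have hS' : IntegrableOn (fun u => u * φ1 (h - u) * R u -
      (φ1 (h - u) - u * φ2 (h - u)) * R u) (Set.Ioi 0) := hJ1.sub hJ2
    rw [integral_add hS hS', integral_const_mul, integral_sub hI1 hI2, e2]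
    rw [integral_sub hI0 hI1] at e1
    have e1' : ∫ u in Set.Ioi 0, u * φ1 (h - u) = ∫ u in Set.Ioi 0, φ (h - u) := by linarith
    rw [e1']
    simp
  rw [e3]
  have e0 : ∫ u in Set.Ioi 0, φ (h - u) ≤ ∫ v, φ v := by
    rw [← integral_sub_left_eq_self φ volume h]
    exact setIntegral_le_integral (hφi.comp_sub_left h) (Eventually.of_forall fun u => (k.pos _).le)
  have hC0 : 0 ≤ C0 := (abs_nonneg _).trans (hRb' 1 one_pos)
  have e4 : ∫ u in Set.Ioi 0, (u * φ1 (h - u) * R u - (φ1 (h - u) - u * φ2 (h - u)) * R u) ≤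
      2 * C0 * ∫ u in Set.Ioi 0, φ (h - u) := by
    rw [← integral_const_mul]
    refine (le_abs_self _).trans ?_
    rw [← Real.norm_eq_abs]
    refine norm_integral_le_of_norm_le (hI0.const_mul _) ?_
    refine (ae_restrict_iff' measurableSet_Ioi).2 (Eventually.of_forall fun u hu => ?_)
    have hu : 0 < u := hu
    have : u * φ1 (h - u) * R u - (φ1 (h - u) - u * φ2 (h - u)) * R u =
      (u * φ1 (h - u) - (φ1 (h - u) - u * φ2 (h - u))) * R u := by ring
    rw [this, Real.norm_eq_abs, abs_mul]
    have hA : |u * φ1 (h - u) - (φ1 (h - u) - u * φ2 (h - u))| ≤ 2 * (1 + u) * φ (h - u) := by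
      refine (abs_sub _ _).trans ?_
      refine (add_le_add_right (abs_sub _ _) _).trans ?_
      rw [abs_mul, abs_mul, abs_of_pos hu]
      nlinarith [k.pos (h - u), hb1 (h - u), hb2 (h - u)]
    calc _ ≤ 2 * (1 + u) * φ (h - u) * |R u| := by gcongr
      _ = 2 * φ (h - u) * ((1 + u) * |R u|) := by ring
      _ ≤ 2 * φ (h - u) * C0 := by
        have := (k.pos (h - u)).le
        gcongr
        exact hRb u hu
      _ = _ := by ring
  have e5 : a * (∫ u in Set.Ioi 0, φ (h - u)) ≤ a * ∫ v, φ v := by gcongr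
  have e6 : 2 * C0 * (∫ u in Set.Ioi 0, φ (h - u)) ≤ 2 * C0 * ∫ v, φ v := by gcongr
  linarith

lemma A3 {ι : Type*} [Countable ι] {L : ι → ℝ} (hL0 : ∀ α, 0 ≤ L α)
    (hfin : ∀ u, {α | L α < u}.Finite) {C0 : ℝ}
    (hD : ∀ u, 0 < u → |Real.exp (-u) * cntL L u| ≤ C0) {l : ℝ} (hl : 0 < l) :
    Summable (fun α => L α * (Real.exp (-L α) * Real.exp (-l * L α))) := by
  have hb : 0 < l / 2 := by linarith
  have hd : ∀ u, HasDerivAt (fun u => u * Real.exp (-l * u))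
      (Real.exp (-l * u) - u * (l * Real.exp (-l * u))) u := fun u =>
    ((hasDerivAt_id u).mul ((hasDerivAt_id u).const_mul (-l)).exp).congr_deriv (by simp; ring)
  have h1 : ∀ u, 0 < u → u * Real.exp (-l * u) ≤ 2 / l * Real.exp (-(l/2) * u) := fun u hu => by
    have e2 : l / 2 * u ≤ Real.exp (l / 2 * u) := by linarith [Real.add_one_le_exp (l / 2 * u)]
    have e3 : u = 2 / l * (l / 2 * u) := by field_simp
    have e4 : 2 / l * (l / 2 * u) ≤ 2 / l * Real.exp (l / 2 * u) := by gcongr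
    calc u * Real.exp (-l * u) ≤ (2 / l * Real.exp (l / 2 * u)) * Real.exp (-l * u) := by
          gcongr; linarith
      _ = _ := by rw [mul_assoc, ← Real.exp_add]; congr 2; ring
  have h2 : ∀ u, 0 < u → Real.exp (-l * u) ≤ Real.exp (-(l/2) * u) := fun u hu => by
    apply Real.exp_le_exp.2; nlinarith
  have key := (abel2 hL0 hfin hb hD (fun u => u * Real.exp (-l * u)) _ hd (by fun_prop)
    (c := 2 / l) (c' := 3) ?_ ?_).2
  · exact key.summable.congr fun α => by ring
  · intro u hu
    rw [abs_of_pos (by positivity)]; exact h1 u hu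
  · intro u hu
    refine (abs_sub _ _).trans ?_
    rw [abs_of_pos (by positivity), abs_of_pos (by positivity)]
    have h3 : l * (u * Real.exp (-l * u)) ≤ l * (2 / l * Real.exp (-(l/2) * u)) := by
      have := h1 u hu
      gcongr
    have h4 : l * (2 / l * Real.exp (-(l/2) * u)) = 2 * Real.exp (-(l/2) * u) := by field_simp
    linarith [h2 u hu]
lemma psi_bound {p : ℕ → ℝ} (hp : ∀ k, 1 < p k)
    (hfin : ∀ u, {α | bL p α < u}.Finite) {a C0 : ℝ} (ha : 0 < a) {R : ℝ → ℝ}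
    (hR : ∀ u, Real.exp (-u) * cntL (bL p) u = a + R u)
    (hRi : IntegrableOn R (Set.Ioi 0))
    (hRb : ∀ u, 0 < u → (1 + u) * |R u| ≤ C0) :
    ∃ B, ∀ h : ℝ, ∀ s : Finset (ℕ × ℕ), (∀ j ∈ s, (j.2 + 1 : ℕ) * Real.log (p j.1) ≤ h) →
      ∑ j ∈ s, Real.log (p j.1) ≤ B * Real.exp h := by
  have hL0 := bL_nonneg hp
  set I := ∫ u in Set.Ioi 0, |R u| with hI
  have hI0 : 0 ≤ I := integral_nonneg fun u => abs_nonneg _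
  -- choice of the scale
  obtain ⟨l, hl0, hl1, hl⟩ : ∃ l : ℝ, 0 < l ∧ l ≤ 1 ∧ a * l + 2 * l * I ≤ a / 2 := by
    refine ⟨min 1 (a / (2 * (a + 2 * I))), by positivity, min_le_left _ _, ?_⟩
    have h1 := min_le_right 1 (a / (2 * (a + 2 * I)))
    have h2 : 0 < a + 2 * I := by positivity
    calc a * min 1 (a / (2 * (a + 2 * I))) + 2 * min 1 (a / (2 * (a + 2 * I))) * I
        = min 1 (a / (2 * (a + 2 * I))) * (a + 2 * I) := by ring
      _ ≤ (a / (2 * (a + 2 * I))) * (a + 2 * I) := by gcongr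
      _ = a / 2 := by field_simp
  obtain ⟨φ, φ1, φ2, k1, k2, k3, k4, k5, k6, k7⟩ := kernel_exists l hl0 hl1
  have k : KernelData l φ φ1 φ2 := ⟨hl0, hl1, k1, k2, k3, k4, k5, k6, k7⟩
  obtain ⟨B, hB⟩ := A2 hL0 hfin ha hR hRb k
  set q : ℕ × ℕ → ℝ := fun j => (j.2 + 1 : ℕ) * Real.log (p j.1) with hq
  set w : ℕ × ℕ → ℝ := fun j => Real.log (p j.1) * Real.exp (-q j) with hw
  have hw0 : ∀ j, 0 ≤ w j := fun j => mul_nonneg (Real.log_pos (hp _)).le (Real.exp_pos _).le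
  have hRb' : ∀ u, 0 < u → |R u| ≤ C0 := fun u hu => by
    have := hRb u hu
    nlinarith [abs_nonneg (R u)]
  -- crude bound
  have hW : Summable fun j => w j * Real.exp (-l * q j) := by
    have h3 := A3 hL0 hfin (C0 := a + C0) (fun u hu => by
      rw [hR]
      exact (abs_add_le _ _).trans (add_le_add (abs_of_pos ha).le (hRb' u hu))) hl0
    have h4 := (bL_conv hp (fun u => Real.exp (-u) * Real.exp (-l * u)) _ h3.hasSum).summable
    have h5 := h4.comp_injective (i := fun j : ℕ × ℕ => (j, (0 : ℕ →₀ ℕ)))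
      (fun x y hxy => by simpa using hxy)
    refine h5.congr fun j => ?_
    have : bL p 0 = 0 := by simp [bL]
    simp only [Function.comp, this, add_zero, hw, hq]
    ring
  have hφe : ∀ h x, φ (h - x) ≤ 2 * Real.exp (l * h) * Real.exp (-l * x) := fun h x => by
    refine (k.hi _).trans ?_
    rw [mul_assoc, ← Real.exp_add]
    gcongr
    nlinarith [neg_abs_le (h - x)]
  have hterm : ∀ h j, w j * φ (h - q j) ≤ 2 * Real.exp (l * h) * (w j * Real.exp (-l * q j)) :=
    fun h j => by nlinarith [mul_le_mul_of_nonneg_left (hφe h (q j)) (hw0 j)]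
  have hPs : ∀ h, Summable fun j => w j * φ (h - q j) := fun h =>
    Summable.of_nonneg_of_le (fun j => mul_nonneg (hw0 j) (k.pos _).le) (hterm h)
      (hW.mul_left (2 * Real.exp (l * h)))
  set P : ℝ → ℝ := fun h => ∑' j, w j * φ (h - q j) with hP
  have hPb : ∀ h, P h ≤ 2 * Real.exp (l * h) * ∑' j, w j * Real.exp (-l * q j) := fun h => by
    rw [← tsum_mul_left]
    exact (hPs h).tsum_le_tsum (hterm h) (hW.mul_left (2 * Real.exp (l * h)))
  have hW0 : 0 ≤ ∑' j, w j * Real.exp (-l * q j) :=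
    tsum_nonneg fun j => mul_nonneg (hw0 j) (Real.exp_pos _).le
  -- self-improving inequality
  have step : ∀ h S, (∀ h' ≤ h, P h' ≤ S) → a * P h ≤ B + a * l * P h + 2 * l * (I * S) := by
    intro h S hS
    choose hintg T hT hTi using A1 hL0 hfin ha hR hRi hRb k
    obtain ⟨T', hT', hTB⟩ := hB h
    have hc := bL_conv hp (fun u => Real.exp (-u) * φ1 (h - u)) _ hT'
    have hc2 : HasSum (fun j => w j * T (h - q j)) T' := by
      refine hc.prod_fiberwise fun j => ?_
      have := (hT (h - q j)).mul_left (w j)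
      have ef : (fun β => Real.log (p j.1) * (Real.exp (-(q j + bL p β)) *
          φ1 (h - (q j + bL p β)))) =
          fun β => w j * (Real.exp (-bL p β) * φ1 (h - q j - bL p β)) := by
        ext β
        rw [neg_add, Real.exp_add, sub_sub, hw]
        ring
      rw [← ef] at this
      exact this
    have hfs : ∀ s : Finset (ℕ × ℕ),
        ∑ j ∈ s, w j * ∫ u in Set.Ioi 0, φ (h - q j - u) * |R u| ≤ I * S := by
      intro s
      simp only [← integral_const_mul]
      rw [← integral_finsetSum _ (fun j _ => (hintg (h - q j)).const_mul (w j)), hI,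
        ← integral_mul_const]
      refine setIntegral_mono_on ?_ (hRi.abs.mul_const S) measurableSet_Ioi ?_
      · exact integrable_finsetSum _ (fun j _ => (hintg (h - q j)).const_mul (w j))
      · intro u hu
        have hu : 0 < u := hu
        have h1 : ∑ j ∈ s, w j * φ (h - u - q j) ≤ P (h - u) :=
          (hPs (h - u)).sum_le_tsum s (fun j _ => mul_nonneg (hw0 j) (k.pos _).le)
        have h2 := h1.trans (hS (h - u) (by linarith))
        calc ∑ j ∈ s, w j * (φ (h - q j - u) * |R u|)
            = |R u| * ∑ j ∈ s, w j * φ (h - u - q j) := by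
              rw [Finset.mul_sum]
              refine Finset.sum_congr rfl fun j _ => ?_
              rw [sub_right_comm]; ring
          _ ≤ |R u| * S := by gcongr
    have hnn : ∀ j, 0 ≤ w j * ∫ u in Set.Ioi 0, φ (h - q j - u) * |R u| := fun j =>
      mul_nonneg (hw0 j) (integral_nonneg fun u => mul_nonneg (k.pos _).le (abs_nonneg _))
    have hs3 := summable_of_sum_le hnn hfs
    have hle3 := hs3.tsum_le_of_sum_le hfs
    have hPh := (hPs h).hasSum
    have hL := hPh.mul_left a
    have hRt := (hc2.add (hPh.mul_left (a * l))).add (hs3.hasSum.mul_left (2 * l))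
    have := hasSum_le (fun j => ?_) hL hRt
    · have h6 : 2 * l * (∑' j, w j * ∫ u in Set.Ioi 0, φ (h - q j - u) * |R u|) ≤
        2 * l * (I * S) := by gcongr
      simp only [hP] at *
      linarith
    · have := mul_le_mul_of_nonneg_left (hTi (h - q j)) (hw0 j)
      linarith
  have hPle : ∀ h, P h ≤ 2 * B / a := by
    intro H
    set S := sSup (P '' Set.Iic H) with hS
    have hbdd : BddAbove (P '' Set.Iic H) := by
      refine ⟨2 * Real.exp (l * H) * ∑' j, w j * Real.exp (-l * q j), ?_⟩
      rintro _ ⟨h, hh, rfl⟩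
      refine (hPb h).trans ?_
      have : h ≤ H := hh
      gcongr
    have h1 : ∀ h ≤ H, P h ≤ S := fun h hh => le_csSup hbdd ⟨h, hh, rfl⟩
    have h2 : S ≤ B / a + S / 2 := by
      refine csSup_le ⟨P H, H, le_refl H, rfl⟩ ?_
      rintro _ ⟨h, hh, rfl⟩
      have hh : h ≤ H := hh
      have h3 := step h S (fun h' hh' => h1 h' (hh'.trans hh))
      have hSh := h1 h hh
      have hPn : 0 ≤ P h := tsum_nonneg fun j => mul_nonneg (hw0 j) (k.pos _).le
      have hS0 : 0 ≤ S := hPn.trans hSh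
      have h4 : a * l * P h ≤ a * l * S := by gcongr
      have h5 : (a * l + 2 * l * I) * S ≤ a / 2 * S := by gcongr
      have h6 : a * P h ≤ B + a / 2 * S := by linarith
      have h7 : P h ≤ (B + a / 2 * S) / a := by rw [le_div_iff₀ ha]; linarith
      refine h7.trans (le_of_eq ?_)
      field_simp
    have h8 : S ≤ 2 * (B / a) := by linarith
    rw [mul_div_assoc]
    exact (h1 H le_rfl).trans h8
  refine ⟨2 * B / a, fun h s hs => ?_⟩
  have h1 : ∑ j ∈ s, w j * φ (h - q j) ≤ P h :=
    (hPs h).sum_le_tsum s (fun j _ => mul_nonneg (hw0 j) (k.pos _).le)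
  have h2 : ∑ j ∈ s, Real.log (p j.1) ≤ (∑ j ∈ s, w j * φ (h - q j)) * Real.exp h := by
    rw [Finset.sum_mul]
    refine Finset.sum_le_sum fun j hj => ?_
    have hqh : q j ≤ h := hs j hj
    have h3 : Real.exp (-(h - q j)) ≤ φ (h - q j) := by
      refine le_trans (Real.exp_le_exp.2 ?_) (k.lo _)
      rw [abs_of_nonneg (by linarith)]
      nlinarith
    have hlog := (Real.log_pos (hp j.1)).le
    calc Real.log (p j.1) = Real.log (p j.1) * Real.exp (-q j) * Real.exp (-(h - q j)) * Real.exp h := by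
          rw [mul_assoc, mul_assoc, ← Real.exp_add, ← Real.exp_add]
          simp
      _ ≤ w j * φ (h - q j) * Real.exp h := by
          have := hw0 j
          simp only [hw] at *
          gcongr
  exact h2.trans (by have := h1.trans (hPle h); gcongr)

lemma cnt_eq {p : ℕ → ℝ} (hp : ∀ k, 1 < p k) (u : ℝ) :
    (beurlingN p (Real.exp u) : ℝ) = cntL (bL p) u := by
  unfold beurlingN cntL
  congr 2
  ext α
  simp only [Set.mem_ofPred_eq, bInt_eq hp, Real.exp_lt_exp]

/-- **Theorem 1, ψ-form (Chebyshev upper estimate for ψ).**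
If `N(x) = ax + O(x/log x)` and `∫₁^∞ |N(x) - ax|/x² dx < ∞` for some `a > 0`,
then `ψ(x) ≤ B x`. -/
theorem chebyshev_upper_estimate_psi
    (p : ℕ → ℝ) (hmono : Monotone p) (hp1 : 1 < p 0) (hptop : Tendsto p atTop atTop)
    (a : ℝ) (ha : 0 < a)
    (hL1 : IntegrableOn (fun x : ℝ => ((beurlingN p x : ℝ) - a * x) / x ^ 2) (Set.Ici 1))
    (C : ℝ) (hO : ∀ x : ℝ, 2 ≤ x → |(beurlingN p x : ℝ) - a * x| ≤ C * x / Real.log x) :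
    ∃ B : ℝ, ∀ x : ℝ, 1 ≤ x → beurlingPsi p x ≤ B * x := by
  have hp : ∀ k, 1 < p k := fun k => hp1.trans_le (hmono (Nat.zero_le k))
  have hfin := bL_finite hmono hp hptop
  set R : ℝ → ℝ := fun u => Real.exp (-u) * cntL (bL p) u - a with hRdef
  have hR : ∀ u, Real.exp (-u) * cntL (bL p) u = a + R u := fun u => by simp [hRdef]
  have hRe : ∀ u, R u = (beurlingN p (Real.exp u) - a * Real.exp u) / Real.exp u := fun u => by
    simp only [hRdef]
    rw [cnt_eq hp, Real.exp_neg]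
    field_simp
  have hRi : IntegrableOn R (Set.Ioi 0) := by
    have himg : Real.exp '' Set.Ioi 0 = Set.Ioi 1 := by
      ext x
      constructor
      · rintro ⟨u, hu, rfl⟩
        exact Real.one_lt_exp_iff.2 hu
      · intro hx
        have hx : 1 < x := hx
        exact ⟨Real.log x, Real.log_pos hx, Real.exp_log (by linarith)⟩
    have h1 := hL1.mono_set Set.Ioi_subset_Ici_self
    rw [← himg, integrableOn_image_iff_integrableOn_abs_deriv_smul measurableSet_Ioi
      (fun x _ => (Real.hasDerivAt_exp x).hasDerivWithinAt) Real.exp_injective.injOn] at h1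
    refine h1.congr (Eventually.of_forall fun u => ?_)
    simp only [hRe, smul_eq_mul, abs_of_pos (Real.exp_pos u)]
    field_simp
  have hlog2 : (1:ℝ) / 2 < Real.log 2 := by linarith [Real.log_two_gt_d9]
  have hRb : ∀ u, 0 < u → (1 + u) * |R u| ≤ 3 * |C| + 2 * (cntL (bL p) (Real.log 2) + a) := by
    intro u hu
    have hc0 := cntL_nonneg (bL p) (Real.log 2)
    rcases le_total (Real.log 2) u with h | h
    · have h2 : 2 ≤ Real.exp u := by
        rw [← Real.log_le_iff_le_exp (by norm_num)]; exact h
      have h3 := hO _ h2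
      rw [Real.log_exp] at h3
      have h4 : |R u| ≤ C / u := by
        rw [hRe, abs_div, abs_of_pos (Real.exp_pos u), div_le_iff₀ (Real.exp_pos u)]
        refine h3.trans (le_of_eq ?_)
        ring
      have h5 : C / u ≤ |C| / u := by gcongr; exact le_abs_self C
      have h6 : (1 + u) * |R u| ≤ (1 + u) * (|C| / u) := by gcongr; linarith
      have h7 : (1 + u) * (|C| / u) ≤ 3 * |C| := by
        rw [← mul_div_assoc, div_le_iff₀ hu]
        nlinarith [abs_nonneg C]
      linarith
    · have h1 : cntL (bL p) u ≤ cntL (bL p) (Real.log 2) := cntL_mono hfin h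
      have h2 : Real.exp (-u) ≤ 1 := by rw [Real.exp_le_one_iff]; linarith
      have h3 : |R u| ≤ cntL (bL p) (Real.log 2) + a := by
        simp only [hRdef]
        refine (abs_sub _ _).trans ?_
        rw [abs_of_pos ha, abs_of_nonneg (mul_nonneg (Real.exp_pos _).le (cntL_nonneg _ _))]
        have := mul_le_of_le_one_left (cntL_nonneg (bL p) u) h2
        linarith
      have h4 : u ≤ 1 := by linarith [Real.log_two_lt_d9]
      nlinarith [abs_nonneg (R u), abs_nonneg C]
  obtain ⟨B, hB⟩ := psi_bound hp hfin ha hR hRi hRb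
  have hB0 : 0 ≤ B := by
    have := hB 0 ∅ (by simp)
    simpa using this
  refine ⟨B, fun x hx => ?_⟩
  unfold beurlingPsi
  have hx0 : 0 < x := by linarith
  apply Real.tsum_le_of_sum_le
  · intro q; exact (Real.log_pos (hp _)).le
  intro s
  classical
  have hinj : Set.InjOn (fun q : {q : ℕ × ℕ // 1 ≤ q.2 ∧ (p q.1) ^ q.2 < x} =>
      ((q : ℕ × ℕ).1, (q : ℕ × ℕ).2 - 1)) s := by
    rintro ⟨⟨k, m⟩, hm, h⟩ _ ⟨⟨k', m'⟩, hm', h'⟩ _ he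
    simp only [Prod.mk.injEq] at he hm hm'
    obtain ⟨rfl, he⟩ := he
    have : m = m' := by omega
    subst this; rfl
  have := hB (Real.log x) (s.image (fun q : {q : ℕ × ℕ // 1 ≤ q.2 ∧ (p q.1) ^ q.2 < x} => ((q : ℕ × ℕ).1, (q : ℕ × ℕ).2 - 1))) ?_
  · rw [Finset.sum_image hinj, Real.exp_log hx0] at this
    exact this
  · intro j hj
    rw [Finset.mem_image] at hj
    obtain ⟨⟨⟨k, m⟩, hm, h⟩, _, rfl⟩ := hj
    simp only at hm h ⊢
    rw [Nat.sub_add_cancel hm, ← Real.log_pow]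
    exact Real.log_le_log (pow_pos (by linarith [hp k]) _) h.le
end

section
/- Suppose a > 0, N(x) ≤ C·x for all x ≥ 1, and the function E₁ defined by E₁(u) = e^{−u} N(e^u) − a for u > 0 and E₁(u) = 0 for u ≤ 0 is integrable on ℝ. Let Ê₁(t) = ∫_ℝ E₁(u) e^{−itu} du. Then the function G defined on the closed half-plane {Re s ≥ 1} by G(s) = ζ(s) − a/(s − 1) for Re s > 1 and G(1 + it) = (1 + it) Ê₁(t) + a for t ∈ ℝ is continuous; in particular ζ(σ + it) − a/(σ − 1 + it) → (1 + it) Ê₁(t) + a as σ → 1⁺, locally uniformly in t. -/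
open MeasureTheory Real Filter Complex

/-- The Beurling zeta function `ζ(s) = ∑_α n(α)^{-s}`. -/
noncomputable def beurlingZeta (p : ℕ → ℝ) (s : ℂ) : ℂ :=
  ∑' α : ℕ →₀ ℕ, (beurlingInt p α : ℂ) ^ (-s)

/-- The error term `E₁(u) = e^{-u} N(e^u) - a` for `u > 0`, and `0` for `u ≤ 0`. -/
noncomputable def beurlingE₁ (p : ℕ → ℝ) (a : ℝ) (u : ℝ) : ℝ :=
  if 0 < u then Real.exp (-u) * (beurlingN p (Real.exp u) : ℝ) - a else 0

/-- Fourier transform `Ê₁(t) = ∫ E₁(u) e^{-itu} du`. -/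
noncomputable def beurlingE₁FT (p : ℕ → ℝ) (a : ℝ) (t : ℝ) : ℂ :=
  ∫ u : ℝ, (beurlingE₁ p a u : ℂ) * Complex.exp (-Complex.I * t * u)

lemma bz_int_pos_ge (p : ℕ → ℝ) (hp : ∀ k, 1 < p k) (α : ℕ →₀ ℕ) : 1 ≤ beurlingInt p α := by
  unfold beurlingInt Finsupp.prod
  have h := Finset.prod_le_prod (s := α.support) (f := fun _ => (1 : ℝ))
    (g := fun k => p k ^ α k) (fun _ _ => zero_le_one) (fun k _ => one_le_pow₀ (hp k).le)
  simpa using h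

lemma bz_factor_le (p : ℕ → ℝ) (hp : ∀ k, 1 < p k) (α : ℕ →₀ ℕ) (k : ℕ) :
    p k ^ α k ≤ beurlingInt p α := by
  have h := Finsupp.mul_prod_erase' α k (fun k e => p k ^ e) (fun _ => pow_zero _)
  have h1 := bz_int_pos_ge p hp (α.erase k)
  unfold beurlingInt at *
  rw [← h]
  exact le_mul_of_one_le_right (pow_nonneg (by linarith [hp k]) _) h1

lemma bz_finite (p : ℕ → ℝ) (hmono : Monotone p) (hp1 : 1 < p 0) (hptop : Tendsto p atTop atTop)
    (x : ℝ) : {α : ℕ →₀ ℕ | beurlingInt p α < x}.Finite := by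
  have hp : ∀ k, 1 < p k := fun k => hp1.trans_le (hmono (Nat.zero_le k))
  obtain ⟨K, hK⟩ := (hptop.eventually_ge_atTop x).exists_forall_of_atTop
  obtain ⟨M, hM⟩ := pow_unbounded_of_one_lt x hp1
  refine (Set.finite_Iic (Finsupp.indicator (Finset.range K) (fun _ _ => M))).subset ?_
  intro α hα
  simp only [Set.mem_ofPred_eq] at hα
  rw [Set.mem_Iic]
  intro k
  have h := (bz_factor_le p hp α k).trans_lt hα
  by_cases hk : k < K
  · rw [Finsupp.indicator_of_mem (Finset.mem_range.2 hk)]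
    by_contra hc
    push Not at hc
    have h1 : p 0 ^ M ≤ p 0 ^ α k := pow_le_pow_right₀ hp1.le hc.le
    have h2 : p 0 ^ α k ≤ p k ^ α k := pow_le_pow_left₀ (by linarith) (hmono (Nat.zero_le k)) _
    linarith
  · by_contra hc
    have h0 : α k ≠ 0 := by
      intro h0; rw [h0] at hc; exact hc (Nat.zero_le _)
    have h1 : p k ≤ p k ^ α k := le_self_pow₀ (hp k).le h0
    have := hK k (not_lt.1 hk)
    linarith

/-- The Laplace-type integral of `E₁`. -/
noncomputable def bzF (p : ℕ → ℝ) (a : ℝ) (s : ℂ) : ℂ :=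
  ∫ u : ℝ, (beurlingE₁ p a u : ℂ) * Complex.exp (-(s - 1) * u)

lemma bz_norm_le (p : ℕ → ℝ) (a : ℝ) (s : ℂ) (hs : 1 ≤ s.re) (u : ℝ) :
    ‖(beurlingE₁ p a u : ℂ) * Complex.exp (-(s - 1) * u)‖ ≤ ‖beurlingE₁ p a u‖ := by
  rw [norm_mul, Complex.norm_real, Complex.norm_exp]
  by_cases hu : 0 < u
  · refine mul_le_of_le_one_right (norm_nonneg _) ?_
    rw [Real.exp_le_one_iff]
    simp
    nlinarith
  · simp [beurlingE₁, hu]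

lemma bz_meas (p : ℕ → ℝ) (a : ℝ) (hE₁ : Integrable (beurlingE₁ p a)) (s : ℂ) :
    AEStronglyMeasurable
      (fun u : ℝ => (beurlingE₁ p a u : ℂ) * Complex.exp (-(s - 1) * u)) volume := by
  refine hE₁.ofReal.aestronglyMeasurable.mul ?_
  exact Continuous.aestronglyMeasurable (by fun_prop)

lemma bzF_cont (p : ℕ → ℝ) (a : ℝ) (hE₁ : Integrable (beurlingE₁ p a)) :
    ContinuousOn (bzF p a) {s : ℂ | 1 ≤ s.re} := by
  unfold bzF
  refine continuousOn_of_dominated (bound := fun u => ‖beurlingE₁ p a u‖)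
    (fun s _ => bz_meas p a hE₁ s)
    (fun s hs => Eventually.of_forall fun u => bz_norm_le p a s hs u) hE₁.norm ?_
  refine Eventually.of_forall fun u => Continuous.continuousOn (by fun_prop)

lemma bz_sum (p : ℕ → ℝ) (hp : ∀ k, 1 < p k)
    (hfin : ∀ x, {α : ℕ →₀ ℕ | beurlingInt p α < x}.Finite)
    (u : ℝ) {R : Type*} [Semiring R] [TopologicalSpace R] (c : R) :
    ∑' α : ℕ →₀ ℕ, (Set.Ioi (Real.log (beurlingInt p α))).indicator (fun _ : ℝ => c) u
      = (beurlingN p (Real.exp u) : R) * c := by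
  classical
  have key : ∀ α, u ∈ Set.Ioi (Real.log (beurlingInt p α)) ↔ α ∈ (hfin (Real.exp u)).toFinset := by
    intro α
    rw [Set.Finite.mem_toFinset, Set.mem_Ioi, Set.mem_ofPred_eq,
      Real.log_lt_iff_lt_exp (by linarith [bz_int_pos_ge p hp α])]
  rw [tsum_eq_sum (s := (hfin (Real.exp u)).toFinset)]
  · rw [Finset.sum_congr rfl (g := fun _ => c)]
    · rw [Finset.sum_const, nsmul_eq_mul, beurlingN, Set.ncard_eq_toFinset_card _ (hfin _)]
    · intro α hα
      rw [Set.indicator_of_mem ((key α).2 hα)]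
  · intro α hα
    rw [Set.indicator_of_notMem (fun h => hα ((key α).1 h))]

lemma bz_term (n : ℝ) (hn : 1 ≤ n) (s : ℂ) (hs : 1 < s.re) :
    s * ∫ u in Set.Ioi (0:ℝ), (Set.Ioi (Real.log n)).indicator
      (fun u : ℝ => Complex.exp (-s * u)) u = (n : ℂ) ^ (-s) := by
  have hs0 : s ≠ 0 := by
    rintro rfl; simp at hs; linarith
  rw [setIntegral_indicator measurableSet_Ioi, Set.Ioi_inter_Ioi,
    max_eq_right (Real.log_nonneg hn), integral_exp_mul_complex_Ioi (by simp; linarith),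
    Complex.cpow_def_of_ne_zero (by exact_mod_cast (by linarith : n ≠ 0)),
    ← Complex.ofReal_log (by linarith), mul_comm (-s)]
  field_simp

lemma bz_zeta (p : ℕ → ℝ) (hp : ∀ k, 1 < p k)
    (hfin : ∀ x, {α : ℕ →₀ ℕ | beurlingInt p α < x}.Finite)
    (C : ℝ) (hC : ∀ x : ℝ, 1 ≤ x → (beurlingN p x : ℝ) ≤ C * x) (s : ℂ) (hs : 1 < s.re) :
    beurlingZeta p s =
      s * ∫ u in Set.Ioi (0:ℝ), (beurlingN p (Real.exp u) : ℂ) * Complex.exp (-s * u) := by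
  have hsum : ∀ u : ℝ, (beurlingN p (Real.exp u) : ℂ) * Complex.exp (-s * u) =
      ∑' α : ℕ →₀ ℕ, (Set.Ioi (Real.log (beurlingInt p α))).indicator
        (fun u : ℝ => Complex.exp (-s * u)) u := by
    intro u
    rw [← bz_sum p hp hfin]
    rfl
  simp_rw [hsum]
  have hmeas : ∀ α : ℕ →₀ ℕ, Measurable ((Set.Ioi (Real.log (beurlingInt p α))).indicator
        (fun u : ℝ => Complex.exp (-s * u))) := fun α =>
    (Continuous.measurable (by fun_prop)).indicator measurableSet_Ioi
  rw [integral_tsum (fun α => (hmeas α).aestronglyMeasurable), ← tsum_mul_left]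
  · unfold beurlingZeta
    congr 1
    ext α
    rw [bz_term _ (bz_int_pos_ge p hp α) s hs]
  · rw [← lintegral_tsum (fun α => (hmeas α).enorm.aemeasurable)]
    have hint : IntegrableOn (fun u : ℝ => C * Real.exp ((1 - s.re) * u)) (Set.Ioi 0) :=
      (integrableOn_exp_mul_Ioi (by linarith) 0).const_mul C
    refine ((setLIntegral_mono' measurableSet_Ioi ?_).trans_lt hint.2).ne
    intro u hu
    have h1 : ∀ α : ℕ →₀ ℕ, ‖(Set.Ioi (Real.log (beurlingInt p α))).indicator
        (fun u : ℝ => Complex.exp (-s * u)) u‖ₑ = (Set.Ioi (Real.log (beurlingInt p α))).indicator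
        (fun _ : ℝ => ‖Complex.exp (-s * u)‖ₑ) u := by
      intro α
      by_cases h : u ∈ Set.Ioi (Real.log (beurlingInt p α))
      · rw [Set.indicator_of_mem h, Set.indicator_of_mem h]
      · rw [Set.indicator_of_notMem h, Set.indicator_of_notMem h, enorm_zero]
    simp_rw [h1]
    rw [bz_sum p hp hfin]
    have h2 : ((beurlingN p (Real.exp u) : ℕ) : ENNReal) = ‖(beurlingN p (Real.exp u) : ℝ)‖ₑ := by
      simp
    rw [h2, ← enorm_norm (Complex.exp _), ← enorm_mul]
    have hC' := hC (Real.exp u) (Real.one_le_exp (le_of_lt hu))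
    have h3 : (beurlingN p (Real.exp u) : ℝ) * ‖Complex.exp (-s * u)‖
        ≤ C * Real.exp ((1 - s.re) * u) := by
      rw [Complex.norm_exp]
      have : (-s * u).re = - s.re * u := by simp
      rw [this]
      calc _ ≤ C * Real.exp u * Real.exp (-s.re * u) := by gcongr
        _ = _ := by rw [mul_assoc, ← Real.exp_add]; ring_nf
    rw [enorm_le_iff_norm_le, Real.norm_of_nonneg (by positivity)]
    exact h3.trans (le_abs_self _)

lemma bz_G (p : ℕ → ℝ) (hp : ∀ k, 1 < p k)
    (hfin : ∀ x, {α : ℕ →₀ ℕ | beurlingInt p α < x}.Finite) (a : ℝ)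
    (C : ℝ) (hC : ∀ x : ℝ, 1 ≤ x → (beurlingN p x : ℝ) ≤ C * x)
    (hE₁ : Integrable (beurlingE₁ p a)) (s : ℂ) (hs : 1 < s.re) :
    beurlingZeta p s - a / (s - 1) = s * bzF p a s + a := by
  have hs1 : s - 1 ≠ 0 := by
    intro h
    rw [sub_eq_zero] at h
    rw [h] at hs; simp at hs
  have hI1 : Integrable (fun u : ℝ => (beurlingE₁ p a u : ℂ) * Complex.exp (-(s - 1) * u)) :=
    hE₁.norm.mono' (bz_meas p a hE₁ s) (Eventually.of_forall fun u => bz_norm_le p a s hs.le u)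
  have hI2 : IntegrableOn (fun u : ℝ => (a : ℂ) * Complex.exp (-(s - 1) * u)) (Set.Ioi 0) :=
    (integrableOn_exp_mul_complex_Ioi (by simp; linarith) 0).const_mul _
  have h1 : ∫ u in Set.Ioi (0:ℝ), (beurlingN p (Real.exp u) : ℂ) * Complex.exp (-s * u)
      = ∫ u in Set.Ioi (0:ℝ), ((beurlingE₁ p a u : ℂ) * Complex.exp (-(s - 1) * u)
        + (a : ℂ) * Complex.exp (-(s - 1) * u)) := by
    refine setIntegral_congr_fun measurableSet_Ioi fun u hu => ?_
    have hu' : 0 < u := hu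
    have he : Complex.exp (-s * u) = Complex.exp (-u) * Complex.exp (-(s - 1) * u) := by
      rw [← Complex.exp_add]; ring_nf
    simp only [beurlingE₁, if_pos hu', he]
    push_cast
    ring
  have h2 : ∫ u in Set.Ioi (0:ℝ), (beurlingE₁ p a u : ℂ) * Complex.exp (-(s - 1) * u)
      = bzF p a s := by
    unfold bzF
    refine setIntegral_eq_integral_of_forall_compl_eq_zero fun u hu => ?_
    have hu' : ¬ 0 < u := hu
    simp [beurlingE₁, hu']
  rw [bz_zeta p hp hfin C hC s hs, h1, integral_add hI1.integrableOn hI2, h2,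
    integral_const_mul, integral_exp_mul_complex_Ioi (by simp; linarith)]
  have e1 : -Complex.exp (-(s - 1) * ((0 : ℝ) : ℂ)) / -(s - 1) = 1 / (s - 1) := by
    rw [Complex.ofReal_zero, mul_zero, Complex.exp_zero, neg_div_neg_eq]
  rw [e1]
  field_simp
  ring

/-- If `E₁ ∈ L¹`, the function `G(s) = ζ(s) - a/(s-1)` (for `Re s > 1`),
`G(1+it) = (1+it)Ê₁(t) + a` (on `Re s = 1`), is continuous on the closed half-plane
`Re s ≥ 1`; in particular `ζ(σ+it) - a/(σ-1+it) → (1+it)Ê₁(t) + a` as `σ → 1⁺`,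
locally uniformly in `t`. -/
theorem boundary_continuity_of_zeta
    (p : ℕ → ℝ) (hmono : Monotone p) (hp1 : 1 < p 0) (hptop : Tendsto p atTop atTop)
    (a : ℝ) (ha : 0 < a)
    (C : ℝ) (hC : ∀ x : ℝ, 1 ≤ x → (beurlingN p x : ℝ) ≤ C * x)
    (hE₁ : Integrable (beurlingE₁ p a)) :
    ContinuousOn
        (fun s : ℂ => if 1 < s.re then beurlingZeta p s - a / (s - 1)
          else (1 + s.im * Complex.I) * beurlingE₁FT p a s.im + a)
        {s : ℂ | 1 ≤ s.re} ∧
      TendstoLocallyUniformly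
        (fun σ : ℝ => fun t : ℝ =>
          beurlingZeta p (σ + t * Complex.I) - a / (σ - 1 + t * Complex.I))
        (fun t : ℝ => (1 + t * Complex.I) * beurlingE₁FT p a t + a)
        (nhdsWithin 1 (Set.Ioi 1)) := by
  have hp : ∀ k, 1 < p k := fun k => hp1.trans_le (hmono (Nat.zero_le k))
  have hfin := bz_finite p hmono hp1 hptop
  have hG := bz_G p hp hfin a C hC hE₁
  have hcont : ContinuousOn (fun s : ℂ => s * bzF p a s + a) {s : ℂ | 1 ≤ s.re} :=
    (continuousOn_id.mul (bzF_cont p a hE₁)).add continuousOn_const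
  have hFT : ∀ t : ℝ, beurlingE₁FT p a t = bzF p a (1 + t * Complex.I) := by
    intro t
    unfold beurlingE₁FT bzF
    congr 1
    ext u
    ring_nf
  constructor
  · refine hcont.congr fun s hs => ?_
    have hs' : 1 ≤ s.re := hs
    by_cases h : 1 < s.re
    · simp only [if_pos h]
      exact hG s h
    · simp only [if_neg h]
      have he : (1 + s.im * Complex.I : ℂ) = s := by
        have : s.re = 1 := le_antisymm (not_lt.1 h) hs'
        apply Complex.ext <;> simp [this]
      rw [hFT, he]
  · rw [Metric.tendstoLocallyUniformly_iff]
    intro ε hε t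
    have hcc : Continuous (fun q : ℝ × ℝ =>
        (fun s : ℂ => s * bzF p a s + a) (((max q.1 1 : ℝ) : ℂ) + q.2 * Complex.I)) := by
      refine hcont.comp_continuous (by fun_prop) fun q => ?_
      simp
    have hc1 : Continuous (fun q : ℝ × ℝ => dist
        ((fun s : ℂ => s * bzF p a s + a) (((max 1 1 : ℝ) : ℂ) + q.2 * Complex.I))
        ((fun s : ℂ => s * bzF p a s + a) (((max q.1 1 : ℝ) : ℂ) + q.2 * Complex.I))) :=
      (hcc.comp (f := fun q : ℝ × ℝ => ((1 : ℝ), q.2)) (by fun_prop)).dist hcc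
    have hev := (hc1.tendsto ((1 : ℝ), t)).eventually
      (eventually_lt_nhds (b := ε) (by simpa using hε))
    rw [nhds_prod_eq] at hev
    obtain ⟨P, hP, Q, hQ, hPQ⟩ := Filter.eventually_prod_iff.1 hev
    refine ⟨{y | Q y}, hQ, ?_⟩
    filter_upwards [nhdsWithin_le_nhds hP, self_mem_nhdsWithin] with σ hσ hσ1 y hy
    have hσ' : 1 < σ := hσ1
    have h := hPQ hσ hy
    simp only [max_self, max_eq_left hσ'.le, Complex.ofReal_one] at h
    have hGσ := hG (σ + y * Complex.I) (by simpa using hσ')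
    have e : (σ : ℂ) - 1 + y * Complex.I = σ + y * Complex.I - 1 := by ring
    rw [hFT, e, hGσ]
    exact h
end
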